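/- arXiv:1003.1675 — 2 statements merged into one kernel-verified Lean document; each statement's English description precedes it below -/
import Mathlib

section
/- Let Γ = Γ₁ *_H Γ₂ be a free product of groups Γ₁ and Γ₂ with amalgamation over a common subgroup H. If Γ₁ and Γ₂ are sofic and H is monotileably amenable, then Γ is sofic. -/
open scoped Classical Pointwise

/-- The normalized Hamming distance between two permutations of a finite set. -/
noncomputable def permDist {X : Type*} [Fintype X] (σ τ : Equiv.Perm X) : ℝ :=
  ((Finset.univ.filter fun x => σ x ≠ τ x).card : ℝ) / (Fintype.card X)

/-- A group is sofic if for every finite subset `F` and every `ε > 0` there is a map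
to some symmetric group that is an `(F, ε)`-quasi-action. -/
def IsSofic (Γ : Type*) [Group Γ] : Prop :=
  ∀ (F : Finset Γ) (ε : ℝ), 0 < ε → ∃ n : ℕ, 0 < n ∧ ∃ φ : Γ → Equiv.Perm (Fin n),
    (∀ g ∈ F, g ≠ 1 → permDist (φ g) 1 > 1 - ε) ∧
    (∀ g₁ ∈ F, ∀ g₂ ∈ F, permDist (φ (g₁⁻¹ * g₂)) ((φ g₁)⁻¹ * φ g₂) < ε)

/-- A finite subset `T` of a group is a tile if the group is the disjoint union of right
translates of `T`, i.e. there is a set `C` of centers so that `(t, c) ↦ t * c` is a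
bijection from `T × C` onto the group. -/
def IsTile {G : Type*} [Group G] (T : Finset G) : Prop :=
  ∃ C : Set G, Function.Bijective fun p : T × C => (p.1 : G) * (p.2 : G)

/-- A group is monotileably amenable if for every finite set `K` and every `ε > 0` there is
a `(K, ε)`-invariant tile `T`, i.e. a tile with `|K T \ T| < ε |T|`. -/
def MonotileablyAmenable (G : Type*) [Group G] [DecidableEq G] : Prop :=
  ∀ (K : Finset G) (ε : ℝ), 0 < ε →
    ∃ T : Finset G, IsTile T ∧ (((K * T) \ T).card : ℝ) < ε * T.card


namespace SoficAmalgam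

/-! ### Densities -/

/-- The density of a predicate on a finite set. -/
noncomputable def dens {X : Type*} [Fintype X] (P : X → Prop) : ℝ :=
  ((Finset.univ.filter fun x => P x).card : ℝ) / (Fintype.card X)

section dens
variable {X Y : Type*} [Fintype X] [Fintype Y]

lemma permDist_eq (σ τ : Equiv.Perm X) : permDist σ τ = dens fun x => σ x ≠ τ x := by
  unfold permDist dens
  congr!

lemma dens_nonneg (P : X → Prop) : 0 ≤ dens P := by unfold dens; positivity

lemma dens_mono {P Q : X → Prop} (h : ∀ x, P x → Q x) : dens P ≤ dens Q := by
  unfold dens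
  gcongr with x hx
  exact h x

lemma dens_congr {P Q : X → Prop} (h : ∀ x, P x ↔ Q x) : dens P = dens Q :=
  le_antisymm (dens_mono fun x => (h x).1) (dens_mono fun x => (h x).2)

lemma dens_or (P Q : X → Prop) : dens (fun x => P x ∨ Q x) ≤ dens P + dens Q := by
  unfold dens
  rw [← add_div]
  gcongr
  have : (Finset.univ.filter fun x => P x ∨ Q x).card ≤
      (Finset.univ.filter fun x => P x).card + (Finset.univ.filter fun x => Q x).card := by
    rw [Finset.filter_or]
    exact Finset.card_union_le _ _
  rw [← Nat.cast_add, Nat.cast_le]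
  convert this

lemma dens_le_add {P Q R : X → Prop} (h : ∀ x, R x → P x ∨ Q x) :
    dens R ≤ dens P + dens Q := (dens_mono h).trans (dens_or P Q)

lemma dens_false : dens (fun _ : X => False) = 0 := by simp [dens]

lemma dens_exists {ι : Type*} (s : Finset ι) (P : ι → X → Prop) {δ : ℝ}
    (h : ∀ i ∈ s, dens (P i) ≤ δ) : dens (fun x => ∃ i ∈ s, P i x) ≤ s.card * δ := by
  induction s using Finset.induction_on with
  | empty => simp [dens_false]
  | insert a s ha ih =>
    rw [Finset.card_insert_of_notMem ha]
    have h1 := ih fun i hi => h i (Finset.mem_insert_of_mem hi)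
    have h2 := h a (Finset.mem_insert_self _ _)
    have h3 : dens (fun x => ∃ i ∈ insert a s, P i x) ≤
        dens (P a) + dens (fun x => ∃ i ∈ s, P i x) := by
      apply dens_le_add
      rintro x ⟨i, hi, hx⟩
      rcases Finset.mem_insert.1 hi with rfl | hi
      · exact Or.inl hx
      · exact Or.inr ⟨i, hi, hx⟩
    push_cast
    linarith

lemma dens_equiv (e : X ≃ Y) (P : Y → Prop) : dens (fun x => P (e x)) = dens P := by
  unfold dens
  rw [Fintype.card_congr e]
  congr 2
  refine Finset.card_bij (fun x _ => e x) ?_ ?_ ?_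
  · simp
  · simp
  · intro b hb
    exact ⟨e.symm b, by simpa using hb, by simp⟩

lemma dens_prod_le {P : X × Y → Prop} {ε : ℝ} (hε : 0 ≤ ε)
    (h : ∀ a, dens (fun b => P (a, b)) ≤ ε) : dens P ≤ ε := by
  unfold dens
  apply div_le_of_le_mul₀ (by positivity) hε
  have : (Finset.univ.filter fun x => P x).card =
      ∑ a : X, (Finset.univ.filter fun b => P (a, b)).card := by
    simp only [Finset.card_filter]
    rw [Fintype.sum_prod_type]
  rw [this, Fintype.card_prod]
  push_cast
  calc ∑ a : X, ((Finset.univ.filter fun b => P (a, b)).card : ℝ)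
      ≤ ∑ a : X, ε * Fintype.card Y := by
        apply Finset.sum_le_sum
        intro a _
        rcases isEmpty_or_nonempty Y with hY | hY
        · simp
        · have := h a
          unfold dens at this
          rwa [div_le_iff₀ (by exact_mod_cast Fintype.card_pos)] at this
    _ = _ := by simp; ring

lemma dens_prod_le' {P : X × Y → Prop} {ε : ℝ} (hε : 0 ≤ ε)
    (h : ∀ b, dens (fun a => P (a, b)) ≤ ε) : dens P ≤ ε := by
  rw [← dens_equiv (Equiv.prodComm Y X)]
  exact dens_prod_le hε h

lemma dens_fst {P : X → Prop} {ε : ℝ} (h : dens P ≤ ε) :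
    dens (fun p : X × Y => P p.1) ≤ ε :=
  dens_prod_le' ((dens_nonneg P).trans h) fun _ => h

lemma dens_not [Nonempty X] (P : X → Prop) : dens (fun x => ¬ P x) = 1 - dens P := by
  unfold dens
  rw [eq_sub_iff_add_eq, ← add_div, div_eq_one_iff_eq (by exact_mod_cast Fintype.card_ne_zero)]
  rw [add_comm]
  have := Finset.card_filter_add_card_filter_not (s := (Finset.univ : Finset X)) (fun x => P x)
  rw [Finset.card_univ] at this
  rw [← this]
  push_cast
  congr!

end dens

attribute [irreducible] dens

lemma permDist_comm {X : Type*} [Fintype X] (σ τ : Equiv.Perm X) :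
    permDist σ τ = permDist τ σ := by
  simp only [permDist_eq]
  exact dens_congr fun x => ne_comm

lemma permDist_nonneg {X : Type*} [Fintype X] (σ τ : Equiv.Perm X) : 0 ≤ permDist σ τ := by
  rw [permDist_eq]; exact dens_nonneg _

lemma permDist_triangle {X : Type*} [Fintype X] (σ τ υ : Equiv.Perm X) :
    permDist σ υ ≤ permDist σ τ + permDist τ υ := by
  rw [permDist_eq, permDist_eq, permDist_eq]
  refine dens_le_add fun x hx => ?_
  by_cases h : σ x = τ x
  · exact Or.inr (h ▸ hx)
  · exact Or.inl h

lemma permDist_mul_left {X : Type*} [Fintype X] (π σ τ : Equiv.Perm X) :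
    permDist (π * σ) (π * τ) = permDist σ τ := by
  simp only [permDist_eq]
  exact dens_congr fun x => by simp

lemma permDist_mul_right {X : Type*} [Fintype X] (π σ τ : Equiv.Perm X) :
    permDist (σ * π) (τ * π) = permDist σ τ := by
  simp only [permDist_eq]
  exact dens_equiv π fun x => σ x ≠ τ x

lemma permDist_self {X : Type*} [Fintype X] (σ : Equiv.Perm X) : permDist σ σ = 0 := by
  simp [permDist_eq, dens_false]

lemma permDist_inv_one {X : Type*} [Fintype X] (σ : Equiv.Perm X) :
    permDist σ⁻¹ 1 = permDist σ 1 := by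
  rw [← permDist_mul_left σ, permDist_comm]; simp

/-- Good points of a map from a group to a symmetric group. -/
def GoodPt {G X : Type*} [Group G] (σ : G → Equiv.Perm X) (R : Finset G) (x : X) : Prop :=
  ∀ g ∈ R, ∀ h ∈ R, σ (g * h) x = σ g (σ h x) ∧ (g ≠ h → σ g x ≠ σ h x)

lemma exists_good {G : Type*} [Group G] (hG : IsSofic G) (R : Finset G) (δ : ℝ) (hδ : 0 < δ) :
    ∃ n : ℕ, 0 < n ∧ ∃ σ : G → Equiv.Perm (Fin n), dens (fun x => ¬ GoodPt σ R x) ≤ δ := by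
  set S : Finset G := insert 1 (R ∪ R.image (·⁻¹) ∪ (R ×ˢ R).image (fun p => p.1⁻¹ * p.2)) with hS
  obtain ⟨η, hη, hη2⟩ : ∃ η : ℝ, 0 < η ∧ (R ×ˢ R).card * (5 * η) ≤ δ := by
    refine ⟨δ / (5 * ((R ×ˢ R).card + 1)), by positivity, ?_⟩
    have : (0 : ℝ) < (R ×ˢ R).card + 1 := by positivity
    field_simp
    linarith
  obtain ⟨n, hn, σ, h1, h2⟩ := hG S η hη
  have : NeZero n := ⟨hn.ne'⟩
  refine ⟨n, hn, σ, le_trans ?_ hη2⟩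
  have m1 : (1 : G) ∈ S := by simp [hS]
  have m2 : ∀ g ∈ R, g ∈ S := fun g hg => by simp [hS, hg]
  have m3 : ∀ g ∈ R, g⁻¹ ∈ S := fun g hg => by simp [hS, hg]
  have m4 : ∀ g ∈ R, ∀ h ∈ R, g⁻¹ * h ∈ S := fun g hg h hh => by
    simp only [hS, Finset.mem_insert, Finset.mem_union, Finset.mem_image, Finset.mem_product]
    exact Or.inr (Or.inr ⟨(g, h), ⟨hg, hh⟩, rfl⟩)
  have key : ∀ p ∈ R ×ˢ R, dens (fun x => σ (p.1 * p.2) x ≠ σ p.1 (σ p.2 x) ∨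
      (p.1 ≠ p.2 ∧ σ p.1 x = σ p.2 x)) ≤ 5 * η := by
    rintro ⟨g, h⟩ hp
    obtain ⟨hg, hh⟩ := Finset.mem_product.1 hp
    have a1 : permDist (σ 1) 1 < η := by simpa using h2 1 m1 1 m1
    have a2 : permDist (σ g⁻¹) ((σ g)⁻¹ * σ 1) < η := by simpa using h2 g (m2 g hg) 1 m1
    have a3 : permDist ((σ g)⁻¹ * σ 1) ((σ g)⁻¹) < η := by
      have := permDist_mul_left (σ g)⁻¹ (σ 1) 1
      rw [mul_one] at this; rw [this]; exact a1
    have a4 : permDist (σ g⁻¹) (σ g)⁻¹ < 2 * η := by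
      have := permDist_triangle (σ g⁻¹) ((σ g)⁻¹ * σ 1) (σ g)⁻¹; linarith
    have a5 : permDist (σ g⁻¹)⁻¹ (σ g) < 2 * η := by
      rw [← permDist_mul_left (σ g⁻¹), ← permDist_mul_right (σ g)⁻¹]
      simpa [permDist_comm] using a4
    have a6 : permDist (σ (g * h)) ((σ g⁻¹)⁻¹ * σ h) < η := by
      simpa using h2 g⁻¹ (m3 g hg) h (m2 h hh)
    have a7 : permDist (σ (g * h)) (σ g * σ h) < 3 * η := by
      have := permDist_triangle (σ (g * h)) ((σ g⁻¹)⁻¹ * σ h) (σ g * σ h)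
      rw [permDist_mul_right] at this; linarith
    have a8 : dens (fun x => g ≠ h ∧ σ g x = σ h x) ≤ 2 * η := by
      by_cases hgh : g = h
      · simp [hgh, dens_false]; exact hη.le
      have b1 := h1 (g⁻¹ * h) (m4 g hg h hh) (by
        intro h0; exact hgh (inv_mul_eq_one.1 h0))
      have b2 := h2 g (m2 g hg) h (m2 h hh)
      rw [permDist_eq] at b1
      simp only [ne_eq] at b1
      rw [dens_not] at b1
      have : dens (fun x => g ≠ h ∧ σ g x = σ h x) ≤
        dens (fun x => σ (g⁻¹ * h) x ≠ ((σ g)⁻¹ * σ h) x) +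
          dens (fun x => σ (g⁻¹ * h) x = (1 : Equiv.Perm (Fin n)) x) := by
        apply dens_le_add
        rintro x ⟨-, hx⟩
        by_contra! hc
        apply hc.2
        rw [hc.1]
        simp [← hx]
      rw [permDist_eq] at b2
      linarith
    have := dens_or (fun x => σ (g * h) x ≠ σ g (σ h x)) (fun x => g ≠ h ∧ σ g x = σ h x)
    rw [permDist_eq] at a7
    simp only [Equiv.Perm.mul_apply] at a7
    linarith
  refine le_trans (dens_mono ?_) (dens_exists _ _ key)
  intro x hx
  unfold GoodPt at hx
  push Not at hx
  obtain ⟨g, hg, h, hh, hx⟩ := hx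
  refine ⟨(g, h), Finset.mem_product.2 ⟨hg, hh⟩, ?_⟩
  by_cases h0 : σ (g * h) x = σ g (σ h x)
  · exact Or.inr (hx h0)
  · exact Or.inl h0


/-! ### Random orders -/

/-- `ω ∘ a` attains its minimum on `U` at `u`. -/
def MinAt {ι : Type*} {n : ℕ} (U : Finset ι) (a : ι → Fin n) (ω : Equiv.Perm (Fin n)) (u : ι) :
    Prop := u ∈ U ∧ ∀ v ∈ U, ω (a u) ≤ ω (a v)

lemma MinAt.unique {ι : Type*} {n : ℕ} {U : Finset ι} {a : ι → Fin n} {ω : Equiv.Perm (Fin n)}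
    {u v : ι} (ha : Set.InjOn a U) (hu : MinAt U a ω u) (hv : MinAt U a ω v) : u = v :=
  ha hu.1 hv.1 (ω.injective (le_antisymm (hu.2 v hv.1) (hv.2 u hu.1)))

lemma exists_minAt {ι : Type*} {n : ℕ} {U : Finset ι} (hU : U.Nonempty) (a : ι → Fin n)
    (ω : Equiv.Perm (Fin n)) : ∃ u, MinAt U a ω u := by
  obtain ⟨u, hu, h⟩ := Finset.exists_min_image U (fun u => ω (a u)) hU
  exact ⟨u, hu, h⟩

lemma minAt_swap {ι : Type*} {n : ℕ} {U : Finset ι} {a : ι → Fin n} {ω : Equiv.Perm (Fin n)}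
    {u v : ι} (hu : MinAt U a ω u) (hv : v ∈ U) :
    MinAt U a (ω * Equiv.swap (a u) (a v)) v := by
  refine ⟨hv, fun w hw => ?_⟩
  simp only [Equiv.Perm.mul_apply, Equiv.swap_apply_right]
  by_cases h1 : a w = a u
  · rw [h1, Equiv.swap_apply_left]; exact hu.2 v hv
  by_cases h2 : a w = a v
  · rw [h2, Equiv.swap_apply_right]
  rw [Equiv.swap_apply_of_ne_of_ne h1 h2]
  exact hu.2 w hw

lemma card_mul_dens_minAt {ι : Type*} {n : ℕ} (U : Finset ι) (a : ι → Fin n)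
    (ha : Set.InjOn a U) (u : ι) (hu : u ∈ U) :
    U.card * dens (fun ω : Equiv.Perm (Fin n) => MinAt U a ω u) ≤ 1 := by
  have heq : ∀ v ∈ U, dens (fun ω : Equiv.Perm (Fin n) => MinAt U a ω u) ≤
      dens (fun ω : Equiv.Perm (Fin n) => MinAt U a ω v) := by
    intro v hv
    rw [← dens_equiv (Equiv.mulRight (Equiv.swap (a u) (a v)))
      (fun ω : Equiv.Perm (Fin n) => MinAt U a ω v)]
    exact dens_mono fun ω hω => minAt_swap hω hv
  have hsum : ∑ v ∈ U, dens (fun ω : Equiv.Perm (Fin n) => MinAt U a ω v) ≤ 1 := by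
    unfold dens
    rw [← Finset.sum_div]
    apply div_le_one_of_le₀ _ (by positivity)
    rw [← Nat.cast_sum, Nat.cast_le, ← Finset.card_biUnion]
    · exact Finset.card_le_univ _
    · intro v hv w hw hvw
      rw [Function.onFun, Finset.disjoint_left]
      intro ω h1 h2
      simp only [Finset.mem_filter, Finset.mem_univ, true_and] at h1 h2
      exact hvw (h1.unique ha h2)
  calc U.card * dens (fun ω : Equiv.Perm (Fin n) => MinAt U a ω u)
      = ∑ v ∈ U, dens (fun ω : Equiv.Perm (Fin n) => MinAt U a ω u) := by simp
    _ ≤ _ := Finset.sum_le_sum heq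
    _ ≤ 1 := hsum

/-- Minima over two nearly equal sets usually agree. -/
lemma dens_min_ne {ι : Type*} {n : ℕ} (A B : Finset ι) (a : ι → Fin n) (η : ℝ)
    (ha : Set.InjOn a (A ∪ B : Finset ι)) (hA : A.Nonempty) (h1 : ((A \ B).card : ℝ) ≤ η * A.card)
    (h2 : ((B \ A).card : ℝ) ≤ η * A.card) (p q : Equiv.Perm (Fin n) → ι)
    (hp : ∀ ω, MinAt A a ω (p ω)) (hq : ∀ ω, MinAt B a ω (q ω)) :
    dens (fun ω => p ω ≠ q ω) ≤ 2 * η := by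
  set U := A ∪ B with hU
  have hAU : A ⊆ U := Finset.subset_union_left
  have hBU : B ⊆ U := Finset.subset_union_right
  have hUne : U.Nonempty := hA.mono hAU
  have hUpos : (0 : ℝ) < U.card := by exact_mod_cast hUne.card_pos
  set D := (A \ B) ∪ (B \ A) with hD
  have hDc : (D.card : ℝ) ≤ 2 * η * U.card := by
    have e1 : (D.card : ℝ) ≤ (A \ B).card + (B \ A).card := by
      exact_mod_cast Finset.card_union_le _ _
    have e2 : (A.card : ℝ) ≤ U.card := by exact_mod_cast Finset.card_le_card hAU
    have hη : 0 ≤ η := by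
      have : (0 : ℝ) < A.card := by exact_mod_cast hA.card_pos
      by_contra! hneg
      have : η * A.card < 0 := mul_neg_of_neg_of_pos hneg this
      have : (0 : ℝ) ≤ (A \ B).card := by positivity
      linarith
    nlinarith
  have hsub : ∀ ω, p ω ≠ q ω → ∃ u ∈ D, MinAt U a ω u := by
    intro ω hω
    obtain ⟨u, hu⟩ := exists_minAt hUne a ω
    refine ⟨u, ?_, hu⟩
    by_contra hnd
    have huU := hu.1
    have huA : u ∈ A := by
      simp only [hD, hU, Finset.mem_union, Finset.mem_sdiff] at hnd huU; tauto
    have huB : u ∈ B := by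
      simp only [hD, hU, Finset.mem_union, Finset.mem_sdiff] at hnd huU; tauto
    have hA' : MinAt A a ω u := ⟨huA, fun v hv => hu.2 v (hAU hv)⟩
    have hB' : MinAt B a ω u := ⟨huB, fun v hv => hu.2 v (hBU hv)⟩
    apply hω
    rw [(hp ω).unique (ha.mono (by exact_mod_cast hAU)) hA',
      (hq ω).unique (ha.mono (by exact_mod_cast hBU)) hB']
  refine (dens_mono hsub).trans ?_
  have hDU : D ⊆ U := by
    intro u; simp only [hD, hU, Finset.mem_union, Finset.mem_sdiff]; tauto
  refine (dens_exists D _ (δ := 1 / U.card) ?_).trans ?_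
  · intro u hu
    rw [le_div_iff₀ hUpos, mul_comm]
    exact card_mul_dens_minAt U a ha u (hDU hu)
  · rw [mul_one_div, div_le_iff₀ hUpos]
    exact hDc


/-! ### Approximately equivariant maps to a Følner set -/

lemma exists_rho {H G : Type*} [Group H] [Group G] (f : H →* G) (hf : Function.Injective f)
    (hG : IsSofic G) (E T : Finset H) (hT : T.Nonempty) (η : ℝ)
    (hE : ∀ h ∈ E, ((T.image (h * ·) \ T).card : ℝ) ≤ η * T.card) (R : Finset G) (δ : ℝ)
    (hδ : 0 < δ) :
    ∃ (X : Type) (_ : Fintype X) (_ : Nonempty X) (σ : G → Equiv.Perm X) (ρ : X → H),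
      (∀ x, ρ x ∈ T) ∧ dens (fun x => ¬ GoodPt σ R x) ≤ δ ∧
      ∀ h ∈ E, dens (fun x => ρ (σ (f h) x) ≠ h * ρ x) ≤ 2 * η + δ := by
  set R' : Finset G := R ∪ E.image f ∪ T.image f ∪ (E ×ˢ T).image (fun p => f (p.1 * p.2))
    with hR'
  have mR : R ⊆ R' := fun g hg => by simp [hR', hg]
  have mE : ∀ h ∈ E, f h ∈ R' := fun h hh => by
    simp only [hR', Finset.mem_union, Finset.mem_image]
    exact Or.inl (Or.inl (Or.inr ⟨h, hh, rfl⟩))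
  have mT : ∀ t ∈ T, f t ∈ R' := fun h hh => by
    simp only [hR', Finset.mem_union, Finset.mem_image]
    exact Or.inl (Or.inr ⟨h, hh, rfl⟩)
  have mET : ∀ h ∈ E, ∀ t ∈ T, f (h * t) ∈ R' := fun h hh t ht => by
    simp only [hR', Finset.mem_union, Finset.mem_image, Finset.mem_product]
    exact Or.inr ⟨(h, t), ⟨hh, ht⟩, rfl⟩
  have hTpos : (0 : ℝ) < T.card := by exact_mod_cast hT.card_pos
  have hT1 : (1 : ℝ) ≤ T.card := by exact_mod_cast hT.card_pos
  obtain ⟨n, hn, σ, hσ⟩ := exists_good hG R' (δ / (3 * T.card)) (by positivity)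
  have : NeZero n := ⟨hn.ne'⟩
  choose ρ hρ using fun (p : Fin n × Equiv.Perm (Fin n)) =>
    exists_minAt hT (fun t => (σ (f t))⁻¹ p.1) p.2
  have hgood_of : ∀ (S : Finset G) x ω, GoodPt σ S x →
      GoodPt (fun g => Equiv.prodCongr (σ g) (Equiv.refl (Equiv.Perm (Fin n)))) S (x, ω) := by
    intro S x ω hx g hg h hh
    obtain ⟨h1, h2⟩ := hx g hg h hh
    constructor
    · simp [h1]
    · intro hgh h3
      exact h2 hgh (by simpa using h3)
  refine ⟨Fin n × Equiv.Perm (Fin n), instFintypeProd _ _, inferInstance,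
    fun g => Equiv.prodCongr (σ g) (Equiv.refl _), ρ, fun x => (hρ x).1, ?_, ?_⟩
  · refine le_trans (dens_mono (Q := fun p => ¬ GoodPt σ R' p.1) ?_)
      ((dens_fst (Y := Equiv.Perm (Fin n)) hσ).trans ?_)
    · rintro ⟨x, ω⟩ hx hx'
      exact hx (hgood_of R x ω fun g hg h hh => hx' g (mR hg) h (mR hh))
    · apply div_le_self hδ.le; linarith
  · intro h hh
    set B : Finset H := T.image (h * ·) with hB
    have hBc : B.card = T.card := Finset.card_image_of_injective _ (mul_right_injective h)
    have hdiff : (T \ B).card = (B \ T).card := by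
      have e1 := Finset.card_sdiff_add_card_inter T B
      have e2 := Finset.card_sdiff_add_card_inter B T
      rw [Finset.inter_comm] at e2
      omega
    have mU : ∀ s ∈ T ∪ B, f s ∈ R' := by
      intro s hs
      rcases Finset.mem_union.1 hs with hs | hs
      · exact mT s hs
      · obtain ⟨t, ht, rfl⟩ := Finset.mem_image.1 hs
        exact mET h hh t ht
    set Bad : Fin n → Prop := fun y => (∃ t ∈ T, ¬ GoodPt σ R' ((σ (f t))⁻¹ y)) ∨
      ∃ s ∈ T ∪ B, ¬ GoodPt σ R' ((σ (f s))⁻¹ (σ (f h) y)) with hBad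
    have hBadd : dens Bad ≤ δ := by
      refine (dens_or _ _).trans ?_
      have e1 := dens_exists T (fun t y => ¬ GoodPt σ R' ((σ (f t))⁻¹ y))
        (δ := δ / (3 * T.card)) (fun t _ => by
          rw [dens_equiv (σ (f t))⁻¹ (fun y => ¬ GoodPt σ R' y)]; exact hσ)
      have e2 := dens_exists (T ∪ B) (fun s y => ¬ GoodPt σ R' ((σ (f s))⁻¹ (σ (f h) y)))
        (δ := δ / (3 * T.card)) (fun s _ => by
          exact (dens_equiv ((σ (f h)).trans (σ (f s))⁻¹) (fun y => ¬ GoodPt σ R' y)).trans_le hσ)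
      have e3 : ((T ∪ B).card : ℝ) ≤ 2 * T.card := by
        have := Finset.card_union_le T B
        rw [hBc] at this
        have e : ((T ∪ B).card : ℝ) ≤ T.card + T.card := by exact_mod_cast this
        linarith
      have e4 : ((T ∪ B).card : ℝ) * (δ / (3 * T.card)) ≤ 2 * T.card * (δ / (3 * T.card)) := by
        gcongr
      have e5 : T.card * (δ / (3 * T.card)) + 2 * T.card * (δ / (3 * T.card)) = δ := by
        field_simp; norm_num
      linarith
    have main : dens (fun p : Fin n × Equiv.Perm (Fin n) =>
        ¬ Bad p.1 ∧ ρ (σ (f h) p.1, p.2) ≠ h * ρ p) ≤ 2 * η := by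
      have hη : 0 ≤ η := by
        have h3 := hE h hh
        by_contra! hneg
        have : η * T.card < 0 := mul_neg_of_neg_of_pos hneg hTpos
        have : (0 : ℝ) ≤ (T.image (h * ·) \ T).card := by positivity
        linarith
      refine dens_prod_le (by positivity) fun y => ?_
      by_cases hy : Bad y
      · simp only [hy, not_true_eq_false, false_and, dens_false]; positivity
      simp only [hBad, not_or, not_exists, not_and, not_not] at hy
      obtain ⟨hy1, hy2⟩ := hy
      refine (dens_mono fun ω hω => hω.2).trans ?_
      have hshift : ∀ t ∈ T, (σ (f (h * t)))⁻¹ (σ (f h) y) = (σ (f t))⁻¹ y := by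
        intro t ht
        have := (hy1 t ht (f h) (mE h hh) (f t) (mT t ht)).1
        rw [Equiv.Perm.inv_eq_iff_eq, map_mul, this]
        simp
      refine dens_min_ne T B (fun s => (σ (f s))⁻¹ (σ (f h) y)) η ?_ hT ?_ (hE h hh)
        (fun ω => ρ (σ (f h) y, ω)) (fun ω => h * ρ (y, ω)) (fun ω => hρ (σ (f h) y, ω)) ?_
      · intro s hs s' hs' hss
        by_contra hne
        have := (hy2 s hs (f s) (mU s hs) (f s') (mU s' hs')).2 fun h0 => hne (hf h0)
        apply this
        simp only at hss
        conv_rhs => rw [hss]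
        simp
      · rw [hdiff]; exact hE h hh
      · intro ω
        obtain ⟨h1, h2⟩ := hρ (y, ω)
        refine ⟨Finset.mem_image.2 ⟨_, h1, rfl⟩, ?_⟩
        intro v hv
        obtain ⟨t, ht, rfl⟩ := Finset.mem_image.1 hv
        have := h2 t ht
        simp only at this ⊢
        rw [hshift _ h1, hshift _ ht]
        exact this
    refine (dens_le_add (P := fun p : Fin n × Equiv.Perm (Fin n) =>
        ¬ Bad p.1 ∧ ρ (σ (f h) p.1, p.2) ≠ h * ρ p) (Q := fun p => Bad p.1) ?_).trans
      (add_le_add main (dens_fst hBadd))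
    rintro ⟨y, ω⟩ hyω
    by_cases hy : Bad y
    · exact Or.inr hy
    · exact Or.inl ⟨hy, by simpa using hyω⟩


/-! ### Building blocks -/

lemma exists_folner {H : Type*} [Group H] (hH : MonotileablyAmenable H) (K : Finset H)
    (ε : ℝ) (hε : 0 < ε) :
    ∃ T : Finset H, T.Nonempty ∧ ∀ k ∈ K, ((T.image (k * ·) \ T).card : ℝ) ≤ ε * T.card := by
  obtain ⟨T, -, hT⟩ := hH K ε hε
  refine ⟨T, ?_, ?_⟩
  · rw [Finset.nonempty_iff_ne_empty]
    rintro rfl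
    simp at hT
  · intro k hk
    refine le_trans ?_ hT.le
    rw [Nat.cast_le]
    apply Finset.card_le_card
    intro x hx
    obtain ⟨h1, h2⟩ := Finset.mem_sdiff.1 hx
    obtain ⟨t, ht, rfl⟩ := Finset.mem_image.1 h1
    exact Finset.mem_sdiff.2 ⟨Finset.mul_mem_mul hk ht, h2⟩

lemma exists_extend {H : Type*} [Group H] (T : Finset H) :
    ∃ e : H → Equiv.Perm T, ∀ (h : H) (t : T) (ht : h * t ∈ T), e h t = ⟨h * t, ht⟩ := by
  have : ∀ h : H, ∃ e : Equiv.Perm T, ∀ (t : T) (ht : h * t ∈ T), e t = ⟨h * t, ht⟩ := by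
    intro h
    let q : {t : T // h * t ∈ T} ≃ {t : T // h⁻¹ * t ∈ T} :=
      { toFun := fun t => ⟨⟨h * t.1, t.2⟩, by simp⟩
        invFun := fun t => ⟨⟨h⁻¹ * t.1, t.2⟩, by simp⟩
        left_inv := fun t => by simp
        right_inv := fun t => by simp }
    refine ⟨q.extendSubtype, fun t ht => ?_⟩
    rw [Equiv.extendSubtype_apply_of_mem q t ht]
    rfl
  choose e he using this
  exact ⟨e, he⟩

/-- Conjugating map. -/
def shearFst {X T : Type*} (s : T → Equiv.Perm X) : Equiv.Perm (X × T) where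
  toFun v := (s v.2 v.1, v.2)
  invFun v := ((s v.2)⁻¹ v.1, v.2)
  left_inv v := by simp
  right_inv v := by simp

lemma exists_block.{u, v} {H : Type u} [Group H] (hH : MonotileablyAmenable H) (E : Finset H)
    (ε : ℝ) (hε : 0 < ε) :
    ∃ (T : Type u) (_ : Fintype T) (_ : Nonempty T) (e : H → Equiv.Perm T),
      (∀ h ∈ E, h ≠ 1 → dens (fun t => e h t = t) ≤ ε) ∧
      ∀ (G : Type v) [Group G] (f : H →* G) (_ : Function.Injective f) (_ : IsSofic G)
        (F : Finset G), ∃ (Z : Type) (_ : Fintype Z) (_ : Nonempty Z)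
          (A : G → Equiv.Perm (Z × T)),
          (∀ g ∈ F, ∀ h ∈ F, dens (fun v => A (g * h) v ≠ A g (A h v)) ≤ ε) ∧
          (∀ h ∈ E, dens (fun v => A (f h) v ≠ (v.1, e h v.2)) ≤ ε) ∧
          (∀ g ∈ F, g ∉ f.range → dens (fun v => (A g v).1 = v.1) ≤ ε) := by
  obtain ⟨T₀, hT₀, hT₀E⟩ := exists_folner hH E (ε / 16) (by positivity)
  set D : Finset H := (T₀ ×ˢ T₀).image (fun p => p.1 * p.2⁻¹) ∪ E with hD
  have mD : ∀ a ∈ T₀, ∀ b ∈ T₀, a * b⁻¹ ∈ D := fun a ha b hb => by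
    simp only [hD, Finset.mem_union, Finset.mem_image, Finset.mem_product]
    exact Or.inl ⟨(a, b), ⟨ha, hb⟩, rfl⟩
  have mDE : ∀ h ∈ E, h ∈ D := fun h hh => by simp [hD, hh]
  obtain ⟨T, hT, hTD⟩ := exists_folner hH D (ε / (4 * (D.card + 1))) (by positivity)
  have hTpos : (0 : ℝ) < T.card := by exact_mod_cast hT.card_pos
  obtain ⟨e, he⟩ := exists_extend T
  have : Nonempty T := hT.to_subtype
  set BadT : T → Prop := fun t => ∃ d ∈ D, d * t ∉ T with hBadT
  have hbad : dens BadT ≤ ε / 4 := by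
    refine (dens_exists D (fun d (t : T) => d * t ∉ T) (δ := ε / (4 * (D.card + 1))) ?_).trans ?_
    · intro d hd
      unfold dens
      rw [Fintype.card_coe, div_le_iff₀ hTpos]
      refine le_trans ?_ (hTD d hd)
      rw [Nat.cast_le]
      apply Finset.card_le_card_of_injOn (fun t : T => d * (t : H))
      · intro t ht
        have ht' : d * (t : H) ∉ T := by simpa using ht
        simp only [Finset.coe_sdiff, Set.mem_sdiff, Finset.mem_coe, Finset.mem_image]
        exact ⟨⟨t, t.2, rfl⟩, ht'⟩
      · intro t _ t' _ htt
        exact Subtype.ext (mul_left_cancel htt)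
    · have : (0 : ℝ) < D.card + 1 := by positivity
      rw [← mul_div_assoc, div_le_div_iff₀ (by positivity) (by positivity)]
      nlinarith
  refine ⟨T, inferInstance, inferInstance, e, ?_, ?_⟩
  · intro h hh h1
    refine (dens_mono (Q := BadT) ?_).trans (hbad.trans (by linarith))
    intro t ht
    by_contra hb
    simp only [hBadT, not_exists, not_and, not_not] at hb
    rw [he h t (hb h (mDE h hh))] at ht
    apply h1
    simpa using congrArg Subtype.val ht
  · intro G _ f hf hG F
    set R : Finset G := F ∪ T.image f ∪ E.image f ∪
      (F ×ˢ T).image (fun p => p.1 * f p.2) with hR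
    have mF : ∀ g ∈ F, g ∈ R := fun g hg => by simp [hR, hg]
    have mT : ∀ t ∈ T, f t ∈ R := fun t ht => by
      simp only [hR, Finset.mem_union, Finset.mem_image]
      exact Or.inl (Or.inl (Or.inr ⟨t, ht, rfl⟩))
    have mE : ∀ t ∈ E, f t ∈ R := fun t ht => by
      simp only [hR, Finset.mem_union, Finset.mem_image]
      exact Or.inl (Or.inr ⟨t, ht, rfl⟩)
    have mFT : ∀ g ∈ F, ∀ t ∈ T, g * f t ∈ R := fun g hg t ht => by
      simp only [hR, Finset.mem_union, Finset.mem_image, Finset.mem_product]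
      exact Or.inr ⟨(g, t), ⟨hg, ht⟩, rfl⟩
    obtain ⟨Z, i1, i2, σ, ρ, hρ, hgood, hρE⟩ :=
      exists_rho f hf hG E T₀ hT₀ (ε / 16) hT₀E R (ε / 8) (by positivity)
    set A₀ : G → Equiv.Perm (Z × T) := fun g =>
      Equiv.prodShear (σ g) (fun y => e (ρ (σ g y) * (ρ y)⁻¹)) with hA₀
    set C : Equiv.Perm (Z × T) := shearFst (fun t : T => σ (f t)) with hC
    have hgood1 : dens (fun v : Z × T => ¬ GoodPt σ R v.1) ≤ ε / 8 := dens_fst hgood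
    have hbad2 : dens (fun v : Z × T => BadT v.2) ≤ ε / 4 :=
      dens_prod_le (by positivity) fun _ => hbad
    refine ⟨Z, i1, i2, fun g => C⁻¹ * A₀ g * C, ?_, ?_, ?_⟩
    · intro g hg h hh
      have key : dens (fun w : Z × T => A₀ (g * h) w ≠ A₀ g (A₀ h w)) ≤ ε := by
        refine (dens_le_add (P := fun v : Z × T => ¬ GoodPt σ R v.1)
          (Q := fun v : Z × T => BadT v.2) ?_).trans (by linarith)
        rintro ⟨y, t⟩ hv
        by_contra! hc
        obtain ⟨hc1, hc2⟩ := hc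
        simp only [hBadT, not_exists, not_and, not_not] at hc2
        apply hv
        have m1 := (hc1 g (mF g hg) h (mF h hh)).1
        have k1 := hc2 _ (mD _ (hρ (σ h y)) _ (hρ y))
        have k2 := hc2 _ (mD _ (hρ (σ g (σ h y))) _ (hρ y))
        simp only [hA₀, Equiv.prodShear_apply]
        rw [m1, he _ t k1, he _ t k2, he]
        · simp only [Prod.mk.injEq, true_and]
          group
        · simp only
          convert k2 using 1
          group
      refine le_trans (dens_mono ?_) ((dens_equiv C _).trans_le key)
      intro v hv hv'
      apply hv
      simp only [Equiv.Perm.mul_apply]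
      rw [hv']
      simp
    · intro h hh
      have h3 : dens (fun v : Z × T => ρ (σ (f h) (C v).1) ≠ h * ρ (C v).1) ≤ ε / 4 := by
        refine (dens_equiv C (fun v : Z × T => ρ (σ (f h) v.1) ≠ h * ρ v.1)).trans_le ?_
        exact dens_fst ((hρE h hh).trans (by linarith))
      refine (dens_le_add (P := fun v : Z × T => ρ (σ (f h) (C v).1) ≠ h * ρ (C v).1)
          (Q := fun v : Z × T => ¬ GoodPt σ R v.1 ∨ BadT v.2) ?_).trans
          ((add_le_add h3 (dens_or _ _)).trans (by linarith))
      rintro ⟨z, t⟩ hv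
      by_contra! hc
      obtain ⟨hc0, hc1, hc2⟩ := hc
      simp only [hBadT, not_exists, not_and, not_not] at hc2
      apply hv
      have m1 := (hc1 (f h) (mE h hh) (f t) (mT t t.2)).1
      have k1 := hc2 h (mDE h hh)
      simp only [hC, shearFst, Equiv.coe_fn_mk] at hc0
      rw [Equiv.Perm.mul_apply, Equiv.Perm.mul_apply, Equiv.Perm.inv_eq_iff_eq]
      simp only [hC, shearFst, Equiv.coe_fn_mk, hA₀, Equiv.prodShear_apply]
      rw [hc0, mul_inv_cancel_right, he h t k1, ← m1]
      simp
    · intro g hg hgf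
      refine (dens_mono (Q := fun v : Z × T => ¬ GoodPt σ R v.1) ?_).trans
        (hgood1.trans (by linarith))
      rintro ⟨z, t⟩ hv hc
      set t' : T := (A₀ g (C (z, t))).2 with ht'
      have m1 := (hc g (mF g hg) (f t) (mT t t.2)).1
      have m2 := (hc (g * f t) (mFT g hg t t.2) (f t') (mT t' t'.2)).2 (by
        intro h0
        apply hgf
        refine ⟨t' * (t : H)⁻¹, ?_⟩
        rw [map_mul, map_inv, ← h0, mul_inv_cancel_right])
      apply m2
      rw [m1]
      have hv' : (σ (f t'))⁻¹ (σ g (σ (f t) z)) = z := hv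
      rw [Equiv.Perm.inv_eq_iff_eq] at hv'
      exact hv'


/-! ### A finite group with no short relations -/

section words
variable {α : Type*} (M : ℕ)

/-- Left multiplication by a letter on truncated reduced words. -/
noncomputable def wstep (a : α) (l : List α) : List α :=
  if l.head? = some a then l.tail else if l.length < M then a :: l else l

lemma wstep_cons (a : α) {l : List α} (h1 : l.head? ≠ some a) (h2 : l.length < M) :
    wstep M a l = a :: l := by
  simp [wstep, h1, h2]

lemma chain_cons {a : α} {l : List α} (h1 : l.head? ≠ some a) (hl : l.IsChain (· ≠ ·)) :
    (a :: l).IsChain (· ≠ ·) := by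
  cases l with
  | nil => simp
  | cons b l =>
    rw [List.isChain_cons_cons]
    refine ⟨?_, hl⟩
    rintro rfl
    simp at h1

lemma wstep_chain (a : α) {l : List α} (hl : l.IsChain (· ≠ ·)) :
    (wstep M a l).IsChain (· ≠ ·) := by
  unfold wstep
  split_ifs with h1 h2
  · exact hl.tail
  · exact chain_cons h1 hl
  · exact hl

lemma wstep_length (a : α) {l : List α} (hl : l.length ≤ M) : (wstep M a l).length ≤ M := by
  unfold wstep
  split_ifs with h1 h2
  · simp; omega
  · simpa using h2
  · exact hl

lemma wstep_wstep (a : α) {l : List α} (hl : l.IsChain (· ≠ ·)) (hM : l.length ≤ M) :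
    wstep M a (wstep M a l) = l := by
  by_cases h1 : l.head? = some a
  · obtain ⟨l', rfl⟩ : ∃ l', l = a :: l' := by
      cases l with
      | nil => simp at h1
      | cons b l' => simp at h1; exact ⟨l', by rw [h1]⟩
    have : wstep M a (a :: l') = l' := by simp [wstep]
    rw [this]
    apply wstep_cons
    · intro h
      cases l' with
      | nil => simp at h
      | cons b l' =>
        simp at h
        subst h
        rw [List.isChain_cons_cons] at hl
        exact hl.1 rfl
    · simpa using hM
  · by_cases h2 : l.length < M
    · rw [wstep_cons M a h1 h2]
      simp [wstep]
    · simp [wstep, h1, h2]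

end words

lemma exists_group (α : Type) [Fintype α] (M : ℕ) :
    ∃ (Q : Type) (_ : Group Q) (_ : Fintype Q) (c : α → Q), (∀ a, c a * c a = 1) ∧
      ∀ s : List α, s ≠ [] → s.IsChain (· ≠ ·) → s.length ≤ M → (s.map c).prod ≠ 1 := by
  let S := {l : List α // l.IsChain (· ≠ ·) ∧ l.length ≤ M}
  have : Finite S := by
    have := (List.finite_length_le α M).subset
      (t := {l : List α | l.IsChain (· ≠ ·) ∧ l.length ≤ M}) (fun l hl => hl.2)
    exact this.to_subtype
  have : Fintype S := Fintype.ofFinite S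
  let c : α → Equiv.Perm S := fun a =>
    { toFun := fun l => ⟨wstep M a l.1, wstep_chain M a l.2.1, wstep_length M a l.2.2⟩
      invFun := fun l => ⟨wstep M a l.1, wstep_chain M a l.2.1, wstep_length M a l.2.2⟩
      left_inv := fun l => Subtype.ext (wstep_wstep M a l.2.1 l.2.2)
      right_inv := fun l => Subtype.ext (wstep_wstep M a l.2.1 l.2.2) }
  refine ⟨Equiv.Perm S, inferInstance, inferInstance, c, ?_, ?_⟩
  · intro a
    ext1 l
    exact Subtype.ext (wstep_wstep M a l.2.1 l.2.2)
  · have key : ∀ s : List α, s.IsChain (· ≠ ·) → s.length ≤ M →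
        ((s.map c).prod ⟨[], by simp, by simp⟩ : S).1 = s := by
      intro s
      induction s with
      | nil => intro _ _; simp
      | cons a s ih =>
        intro h1 h2
        have h3 := ih h1.tail (by simp at h2; omega)
        rw [List.map_cons, List.prod_cons, Equiv.Perm.mul_apply]
        change wstep M a ((s.map c).prod ⟨[], by simp, by simp⟩ : S).1 = a :: s
        rw [h3]
        apply wstep_cons
        · intro h
          cases s with
          | nil => simp at h
          | cons b l' =>
            simp at h
            subst h
            rw [List.isChain_cons_cons] at h1
            exact h1.1 rfl
        · simpa using h2
    intro s hs h1 h2 h3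
    have := key s h1 h2
    rw [h3] at this
    exact hs this.symm

/-! ### Combining two blocks -/

section combine
variable {Z : Bool → Type} {T Q : Type*} [Group Q]

/-- Lift a permutation of a block to the combined space. -/
noncomputable def blift (c : (Σ b, Z b) → Q) (b : Bool) (τ : Equiv.Perm (Z b × T)) :
    Equiv.Perm ((∀ b, Z b) × T × Q) where
  toFun v := (Function.update v.1 b (τ (v.1 b, v.2.1)).1, (τ (v.1 b, v.2.1)).2,
    c ⟨b, (τ (v.1 b, v.2.1)).1⟩ * (c ⟨b, v.1 b⟩)⁻¹ * v.2.2)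
  invFun v := (Function.update v.1 b (τ⁻¹ (v.1 b, v.2.1)).1, (τ⁻¹ (v.1 b, v.2.1)).2,
    c ⟨b, (τ⁻¹ (v.1 b, v.2.1)).1⟩ * (c ⟨b, v.1 b⟩)⁻¹ * v.2.2)
  left_inv v := by simp [mul_assoc]
  right_inv v := by simp [mul_assoc]

lemma blift_apply (c : (Σ b, Z b) → Q) (b : Bool) (τ : Equiv.Perm (Z b × T))
    (v : (∀ b, Z b) × T × Q) : blift c b τ v =
      (Function.update v.1 b (τ (v.1 b, v.2.1)).1, (τ (v.1 b, v.2.1)).2,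
    c ⟨b, (τ (v.1 b, v.2.1)).1⟩ * (c ⟨b, v.1 b⟩)⁻¹ * v.2.2) := rfl

lemma blift_mul (c : (Σ b, Z b) → Q) (b : Bool) (τ τ' : Equiv.Perm (Z b × T)) :
    blift c b (τ * τ') = blift c b τ * blift c b τ' := by
  ext1 v
  simp [blift_apply, mul_assoc]

lemma blift_congr (c : (Σ b, Z b) → Q) (b : Bool) (τ τ' : Equiv.Perm (Z b × T))
    (v : (∀ b, Z b) × T × Q) (h : τ (v.1 b, v.2.1) = τ' (v.1 b, v.2.1)) :
    blift c b τ v = blift c b τ' v := by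
  simp [blift_apply, h]

lemma blift_of_eq (c : (Σ b, Z b) → Q) (b : Bool) (τ : Equiv.Perm (Z b × T))
    (v : (∀ b, Z b) × T × Q) (t : T) (h : τ (v.1 b, v.2.1) = (v.1 b, t)) :
    blift c b τ v = (v.1, t, v.2.2) := by
  simp [blift_apply, h]

lemma dens_block {Z : Bool → Type} {T Q : Type*} [∀ b, Fintype (Z b)] [Fintype T] [Fintype Q] (b : Bool) {P : Z b × T → Prop}
    {ε : ℝ} (h : dens P ≤ ε) :
    dens (fun v : (∀ b, Z b) × T × Q => P (v.1 b, v.2.1)) ≤ ε := by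
  let e : ((∀ b, Z b) × T × Q) ≃ (Z b × T) × ((∀ j : {j // j ≠ b}, Z j) × Q) :=
    ((Equiv.piSplitAt b Z).prodCongr (Equiv.refl (T × Q))).trans (Equiv.prodProdProdComm _ _ _ _)
  exact (dens_equiv e (fun p => P p.1)).trans_le (dens_fst h)

lemma dens_word [∀ b, Fintype (Z b)] [Fintype T] [Fintype Q] (c : (Σ b, Z b) → Q)
    (hc : ∀ a, c a * c a = 1) {G : Bool → Type*} (A : ∀ b, G b → Equiv.Perm (Z b × T)) (ε : ℝ)
    (w : List (Σ b, G b)) (hw : ∀ x ∈ w, dens (fun v => (A x.1 x.2 v).1 = v.1) ≤ ε)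
    (hch : w.IsChain (fun x y => x.1 ≠ y.1)) :
    dens (fun v : (∀ b, Z b) × T × Q => ¬ ∃ s : List (Σ b, Z b), s.IsChain (· ≠ ·) ∧
      s.length = 2 * w.length ∧ s.head?.map Sigma.fst = w.head?.map Sigma.fst ∧
      ((w.map fun x => blift c x.1 (A x.1 x.2)).prod v).2.2 = (s.map c).prod * v.2.2)
      ≤ w.length * ε := by
  induction w with
  | nil =>
    refine (dens_mono (Q := fun _ => False) ?_).trans (by simp [dens_false])
    intro v hv
    exact hv ⟨[], by simp⟩
  | cons x w ih =>
    have ih' := ih (fun y hy => hw y (List.mem_cons_of_mem _ hy)) hch.tail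
    have hx := hw x List.mem_cons_self
    have hx' := dens_block (Q := Q) x.1 hx
    rw [← dens_equiv (w.map fun x => blift c x.1 (A x.1 x.2)).prod] at hx'
    refine (dens_le_add ?_).trans ((add_le_add ih' hx').trans ?_)
    · intro v hv
      by_contra! hcon
      obtain ⟨⟨s, h1, h2, h3, h4⟩, h5⟩ := hcon
      apply hv
      set u := (w.map fun x => blift c x.1 (A x.1 x.2)).prod v with hu
      refine ⟨⟨x.1, (A x.1 x.2 (u.1 x.1, u.2.1)).1⟩ :: ⟨x.1, u.1 x.1⟩ :: s, ?_, ?_, ?_, ?_⟩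
      · apply chain_cons
        · simp only [List.head?_cons, ne_eq, Option.some.injEq]
          intro h0
          apply h5
          have := (Sigma.mk.inj_iff.1 h0).2
          exact (eq_of_heq this).symm
        apply chain_cons _ h1
        intro h0
        rw [h0] at h3
        cases w with
        | nil => simp at h3
        | cons y w =>
          simp at h3
          rw [List.isChain_cons_cons] at hch
          exact hch.1 h3
      · simp [h2]; ring
      · simp
      · rw [List.map_cons, List.prod_cons, Equiv.Perm.mul_apply, ← hu, blift_apply]
        simp only [List.map_cons, List.prod_cons]
        rw [h4, inv_eq_of_mul_eq_one_left (hc _)]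
        simp only [mul_assoc]
    · simp; linarith

end combine


lemma dens_permCongr {V W : Type*} [Fintype V] [Fintype W] (e : V ≃ W) (σ τ : Equiv.Perm V) :
    permDist (e.permCongrHom σ) (e.permCongrHom τ) = permDist σ τ := by
  rw [permDist_eq, permDist_eq, ← dens_equiv e.symm]
  refine dens_congr fun x => ?_
  simp [Equiv.permCongrHom]

lemma dens_fix_permCongr {V W : Type*} [Fintype V] [Fintype W] (e : V ≃ W) (σ : Equiv.Perm V) :
    dens (fun x => e.permCongrHom σ x = x) = dens (fun x => σ x = x) := by
  rw [← dens_equiv e]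
  refine dens_congr fun x => ?_
  simp [Equiv.permCongrHom]

lemma exists_combined.{u, v} {H : Type u} [Group H] {G : Bool → Type v} [∀ b, Group (G b)]
    (φ : ∀ b, H →* G b) (hinj : ∀ b, Function.Injective (φ b)) (hsofic : ∀ b, IsSofic (G b))
    (hH : MonotileablyAmenable H) (F : ∀ b, Finset (G b)) (E : Finset H) (L : ℕ) (ε : ℝ)
    (hε : 0 < ε) :
    ∃ n : ℕ, 0 < n ∧ ∃ A : ∀ b, G b → Equiv.Perm (Fin n),
      (∀ b, ∀ g ∈ F b, ∀ h ∈ F b, permDist (A b (g * h)) (A b g * A b h) ≤ ε) ∧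
      (∀ h ∈ E, permDist (A false (φ false h)) (A true (φ true h)) ≤ ε) ∧
      (∀ h ∈ E, h ≠ 1 → dens (fun x => A true (φ true h) x = x) ≤ ε) ∧
      (∀ w : List (Σ b, G b), w ≠ [] → w.length ≤ L →
        (∀ x ∈ w, x.2 ∈ F x.1 ∧ x.2 ∉ (φ x.1).range) → w.IsChain (fun x y => x.1 ≠ y.1) →
        dens (fun x => (w.map fun y => A y.1 y.2).prod x = x) ≤ ε) := by
  set η : ℝ := ε / (L + 2) with hη
  have hη0 : 0 < η := by positivity
  have hη2 : (L : ℝ) * η + 2 * η = ε := by rw [hη]; field_simp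
  have hLη : 0 ≤ (L : ℝ) * η := by positivity
  obtain ⟨T, iT, nT, e, he, hblock⟩ := exists_block.{u, v} hH E η hη0
  choose Z iZ nZ A hA1 hA2 hA3 using fun b => hblock (G b) (φ b) (hinj b) (hsofic b) (F b)
  obtain ⟨Q, gQ, iQ, c, hc, hcs⟩ := exists_group (Σ b, Z b) (2 * L)
  let V := (∀ b, Z b) × T × Q
  let q : V ≃ Fin (Fintype.card V) := Fintype.equivFin V
  have hcom : ∀ b, ∀ h ∈ E, dens (fun v : V => blift c b (A b (φ b h)) v ≠
      (v.1, e h v.2.1, v.2.2)) ≤ η := by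
    intro b h hh
    refine (dens_mono ?_).trans (dens_block (Q := Q) b (hA2 b h hh))
    intro v hv hv'
    exact hv (blift_of_eq c b _ v _ hv')
  refine ⟨Fintype.card V, Fintype.card_pos, fun b g => q.permCongrHom (blift c b (A b g)),
    ?_, ?_, ?_, ?_⟩
  · intro b g hg h hh
    rw [← map_mul, dens_permCongr, ← blift_mul, permDist_eq]
    refine ((dens_mono ?_).trans (dens_block (Q := Q) b (hA1 b g hg h hh))).trans (by linarith)
    intro v hv hv'
    exact hv (blift_congr c b _ _ v hv')
  · intro h hh
    rw [dens_permCongr, permDist_eq]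
    refine (dens_le_add ?_).trans ((add_le_add (hcom false h hh) (hcom true h hh)).trans
      (by linarith))
    intro v hv
    by_contra! hcon
    exact hv (hcon.1.trans hcon.2.symm)
  · intro h hh h1
    rw [dens_fix_permCongr]
    have h2 : dens (fun v : V => e h v.2.1 = v.2.1) ≤ η :=
      dens_prod_le hη0.le fun _ => dens_fst (he h hh h1)
    refine (dens_le_add ?_).trans ((add_le_add (hcom true h hh) h2).trans
      (by linarith))
    intro v hv
    by_contra! hcon
    rw [hv] at hcon
    exact hcon.2 (congrArg (fun v : V => v.2.1) hcon.1).symm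
  · intro w hw0 hwL hw hch
    have hprod : (w.map fun y => q.permCongrHom (blift c y.1 (A y.1 y.2))).prod =
        q.permCongrHom (w.map fun y => blift c y.1 (A y.1 y.2)).prod := by
      rw [map_list_prod, List.map_map]; rfl
    simp only [hprod]
    rw [dens_fix_permCongr]
    have hword := dens_word (Q := Q) c hc A η w (fun x hx => hA3 x.1 x.2 (hw x hx).1 (hw x hx).2) hch
    have hle : (w.length : ℝ) * η ≤ L * η := by gcongr
    refine (dens_mono ?_).trans (hword.trans (by linarith))
    rintro v hv ⟨s, h1, h2, -, h4⟩
    have hwpos : 0 < w.length := List.length_pos_iff.2 hw0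
    apply hcs s _ h1 (by omega)
    · rw [hv] at h4
      exact right_eq_mul.1 h4
    · intro h0; rw [h0, List.length_nil] at h2; omega

/-! ### Normal forms -/

section normal
variable {H : Type*} [Group H] {G : Bool → Type*} [∀ b, Group (G b)] (φ : ∀ b, H →* G b)

open Monoid.PushoutI in
/-- The element is in the base group or represented by a reduced word. -/
def HasForm (x : Monoid.PushoutI φ) : Prop :=
  (∃ h, x = base φ h) ∨ ∃ w : List (Σ b, G b), w ≠ [] ∧ (∀ y ∈ w, y.2 ∉ (φ y.1).range) ∧
    w.IsChain (fun x y => x.1 ≠ y.1) ∧ x = (w.map fun y => of (φ := φ) y.1 y.2).prod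

open Monoid.PushoutI in
lemma hasForm_base_mul (h : H) (x : Monoid.PushoutI φ) (hx : HasForm φ x) :
    HasForm φ (base φ h * x) := by
  rcases hx with ⟨h', rfl⟩ | ⟨w, h0, h1, h2, rfl⟩
  · exact Or.inl ⟨h * h', by simp⟩
  · cases w with
    | nil => exact absurd rfl h0
    | cons y w =>
      obtain ⟨b, g⟩ := y
      refine Or.inr ⟨⟨b, φ b h * g⟩ :: w, by simp, ?_, ?_, ?_⟩
      · intro z hz
        rcases List.mem_cons.1 hz with rfl | hz
        · have := h1 ⟨b, g⟩ List.mem_cons_self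
          intro h3
          exact this (((φ b).range.mul_mem_cancel_left ⟨h, rfl⟩).1 h3)
        · exact h1 z (List.mem_cons_of_mem _ hz)
      · cases w with
        | nil => simp
        | cons z w =>
          rw [List.isChain_cons_cons] at h2 ⊢
          exact h2
      · simp [mul_assoc, of_apply_eq_base]

open Monoid.PushoutI in
lemma hasForm_of_mul (b : Bool) (g : G b) (x : Monoid.PushoutI φ) (hx : HasForm φ x) :
    HasForm φ (of (φ := φ) b g * x) := by
  by_cases hg : g ∈ (φ b).range
  · obtain ⟨h, rfl⟩ := hg
    rw [of_apply_eq_base]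
    exact hasForm_base_mul φ h x hx
  rcases hx with ⟨h', rfl⟩ | ⟨w, h0, h1, h2, rfl⟩
  · refine Or.inr ⟨[⟨b, g * φ b h'⟩], by simp, ?_, by simp, ?_⟩
    · intro z hz
      rw [List.mem_singleton] at hz
      subst hz
      intro h3
      exact hg (((φ b).range.mul_mem_cancel_right ⟨h', rfl⟩).1 h3)
    · simp [of_apply_eq_base]
  · cases w with
    | nil => exact absurd rfl h0
    | cons y w =>
      obtain ⟨b', g'⟩ := y
      by_cases hb : b = b'
      · subst hb
        by_cases hgg : g * g' ∈ (φ b).range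
        · obtain ⟨h, hh⟩ := hgg
          have : of (φ := φ) b g * (List.map (fun y => of (φ := φ) y.1 y.2)
              (⟨b, g'⟩ :: w)).prod =
              base φ h * (List.map (fun y => of (φ := φ) y.1 y.2) w).prod := by
            rw [← of_apply_eq_base φ b, hh]
            simp [mul_assoc]
          rw [this]
          apply hasForm_base_mul
          by_cases hw : w = []
          · subst hw; exact Or.inl ⟨1, by simp⟩
          · exact Or.inr ⟨w, hw, fun z hz => h1 z (List.mem_cons_of_mem _ hz), h2.tail, rfl⟩
        · refine Or.inr ⟨⟨b, g * g'⟩ :: w, by simp, ?_, ?_, ?_⟩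
          · intro z hz
            rcases List.mem_cons.1 hz with rfl | hz
            · exact hgg
            · exact h1 z (List.mem_cons_of_mem _ hz)
          · cases w with
            | nil => simp
            | cons z w =>
              rw [List.isChain_cons_cons] at h2 ⊢
              exact h2
          · simp [mul_assoc]
      · refine Or.inr ⟨⟨b, g⟩ :: ⟨b', g'⟩ :: w, by simp, ?_, ?_, ?_⟩
        · intro z hz
          rcases List.mem_cons.1 hz with rfl | hz
          · exact hg
          · exact h1 z hz
        · rw [List.isChain_cons_cons]
          exact ⟨hb, h2⟩
        · simp

open Monoid.PushoutI in
lemma hasForm (x : Monoid.PushoutI φ) : HasForm φ x := by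
  have : ∀ y, HasForm φ y → HasForm φ (x * y) := by
    induction x using Monoid.PushoutI.induction_on with
    | of b g => exact fun y hy => hasForm_of_mul φ b g y hy
    | base h => exact fun y hy => hasForm_base_mul φ h y hy
    | mul x y hx hy => intro z hz; rw [mul_assoc]; exact hx _ (hy _ hz)
  simpa using this 1 (Or.inl ⟨1, by simp⟩)

end normal


/-! ### The main argument -/

open Filter Topology

/-- Families of permutations asymptotically equal to the identity. -/
noncomputable def nullSubgroup {I : Type*} (l : Filter I) (n : I → ℕ) :
    Subgroup (∀ i, Equiv.Perm (Fin (n i))) where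
  carrier := {σ | Tendsto (fun i => permDist (σ i) 1) l (𝓝 0)}
  one_mem' := by
    simp only [Set.mem_ofPred_eq, Pi.one_apply, permDist_self]
    exact tendsto_const_nhds
  mul_mem' := by
    intro σ τ hσ hτ
    simp only [Set.mem_ofPred_eq] at *
    have h0 := hσ.add hτ
    rw [add_zero] at h0
    refine squeeze_zero (fun i => permDist_nonneg _ _) (fun i => ?_) h0
    have h1 := permDist_triangle (σ i * τ i) (τ i) 1
    have h2 := permDist_mul_right (τ i) (σ i) 1
    rw [one_mul] at h2
    rw [Pi.mul_apply]
    linarith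
  inv_mem' := by
    intro σ hσ
    simp only [Set.mem_ofPred_eq, Pi.inv_apply, permDist_inv_one] at *
    exact hσ

lemma mem_nullSubgroup {I : Type*} {l : Filter I} {n : I → ℕ}
    {σ : ∀ i, Equiv.Perm (Fin (n i))} :
    σ ∈ nullSubgroup l n ↔ Tendsto (fun i => permDist (σ i) 1) l (𝓝 0) := Iff.rfl

instance {I : Type*} (l : Filter I) (n : I → ℕ) : (nullSubgroup l n).Normal where
  conj_mem σ hσ τ := by
    rw [mem_nullSubgroup] at *
    have : ∀ i, permDist ((τ * σ * τ⁻¹) i) 1 = permDist (σ i) 1 := by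
      intro i
      rw [← permDist_mul_left (τ i)⁻¹, ← permDist_mul_right (τ i)]
      simp [mul_assoc]
    simpa only [this] using hσ

lemma mk_eq_iff {I : Type*} {l : Filter I} {n : I → ℕ} {σ τ : ∀ i, Equiv.Perm (Fin (n i))} :
    (QuotientGroup.mk σ : (∀ i, Equiv.Perm (Fin (n i))) ⧸ nullSubgroup l n) =
      QuotientGroup.mk τ ↔ Tendsto (fun i => permDist (σ i) (τ i)) l (𝓝 0) := by
  rw [QuotientGroup.eq, mem_nullSubgroup]
  have : ∀ i, permDist ((σ⁻¹ * τ) i) 1 = permDist (σ i) (τ i) := by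
    intro i
    rw [← permDist_mul_left (σ i), permDist_comm]
    simp
  simp only [this]

lemma isSofic_pushout {H : Type*} [Group H] {G : Bool → Type*} [∀ b, Group (G b)]
    (φ : ∀ b, H →* G b) (hinj : ∀ b, Function.Injective (φ b)) (hsofic : ∀ b, IsSofic (G b))
    (hH : MonotileablyAmenable H) : IsSofic (Monoid.PushoutI φ) := by
  let I := (∀ b, Finset (G b)) × Finset H × ℕ
  let eps : I → ℝ := fun i => 1 / ((i.2.2 : ℝ) + 1)
  have heps : Tendsto eps atTop (𝓝 0) := by
    refine (tendsto_one_div_add_atTop_nhds_zero_nat (𝕜 := ℝ)).comp ?_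
    refine tendsto_atTop.2 fun k => ?_
    filter_upwards [eventually_ge_atTop ((fun _ => ∅, ∅, k) : I)] with i hi
    exact hi.2.2
  choose n hn A hA1 hA2 hA3 hA4 using fun i : I =>
    exists_combined φ hinj hsofic hH i.1 i.2.1 i.2.2 (eps i) (by positivity)
  have evG : ∀ b (g : G b), ∀ᶠ i : I in atTop, g ∈ i.1 b := by
    intro b g
    filter_upwards [eventually_ge_atTop ((Function.update (fun _ => ∅) b {g}, ∅, 0) : I)] with i hi
    have := hi.1 b
    simpa using this
  have evH : ∀ h : H, ∀ᶠ i : I in atTop, h ∈ i.2.1 := by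
    intro h
    filter_upwards [eventually_ge_atTop ((fun _ => ∅, {h}, 0) : I)] with i hi
    have := hi.2.1
    simpa using this
  have evL : ∀ k : ℕ, ∀ᶠ i : I in atTop, k ≤ i.2.2 := by
    intro k
    filter_upwards [eventually_ge_atTop ((fun _ => ∅, ∅, k) : I)] with i hi
    exact hi.2.2
  let P := ∀ i, Equiv.Perm (Fin (n i))
  let N : Subgroup P := nullSubgroup atTop n
  let a : ∀ b, G b → P := fun b g i => A i b g
  let f : ∀ b, G b →* P ⧸ N := fun b => MonoidHom.mk' (fun g => QuotientGroup.mk (a b g)) (by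
    intro g h
    rw [← QuotientGroup.mk_mul, mk_eq_iff]
    refine squeeze_zero' (Eventually.of_forall fun i => permDist_nonneg _ _) ?_ heps
    filter_upwards [evG b g, evG b h] with i h1 h2
    exact hA1 i b g h1 h h2)
  let k : H →* P ⧸ N := (f true).comp (φ true)
  have hk : ∀ b, (f b).comp (φ b) = k := by
    intro b
    cases b with
    | true => rfl
    | false =>
      ext1 h
      change (QuotientGroup.mk (a false (φ false h)) : P ⧸ N) =
        QuotientGroup.mk (a true (φ true h))
      rw [mk_eq_iff]
      refine squeeze_zero' (Eventually.of_forall fun i => permDist_nonneg _ _) ?_ heps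
      filter_upwards [evH h] with i h1
      exact hA2 i h h1
  let Φ : Monoid.PushoutI φ →* P ⧸ N := Monoid.PushoutI.lift f k hk
  have hΦof : ∀ b g, Φ (Monoid.PushoutI.of b g) = QuotientGroup.mk (a b g) := fun b g =>
    Monoid.PushoutI.lift_of ..
  choose ψ hψ using fun x => QuotientGroup.mk_surjective (Φ x)
  have free : ∀ x : Monoid.PushoutI φ, x ≠ 1 → ∃ σ : P, QuotientGroup.mk σ = Φ x ∧
      ∀ᶠ i in atTop, dens (fun v => σ i v = v) ≤ eps i := by
    intro x hx
    rcases hasForm φ x with ⟨h, rfl⟩ | ⟨w, h0, h1, h2, rfl⟩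
    · refine ⟨a true (φ true h), ?_, ?_⟩
      · rw [← hΦof, Monoid.PushoutI.of_apply_eq_base]
      · have hh : h ≠ 1 := by rintro rfl; simp at hx
        filter_upwards [evH h] with i hi
        exact hA3 i h hi hh
    · refine ⟨(w.map fun y => a y.1 y.2).prod, ?_, ?_⟩
      · have e1 : (QuotientGroup.mk (w.map fun y => a y.1 y.2).prod : P ⧸ N) =
          QuotientGroup.mk' N (w.map fun y => a y.1 y.2).prod := rfl
        rw [e1, map_list_prod, map_list_prod, List.map_map, List.map_map]
        congr 1
      · have e2 : ∀ i, (w.map fun y => a y.1 y.2).prod i = (w.map fun y => A i y.1 y.2).prod := by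
          intro i
          have := map_list_prod (Pi.evalMonoidHom (fun i => Equiv.Perm (Fin (n i))) i)
            (w.map fun y => a y.1 y.2)
          rw [List.map_map] at this
          exact this
        have e3 : ∀ᶠ i : I in atTop, ∀ y ∈ w, y.2 ∈ i.1 y.1 := by
          have := (Filter.eventually_all_finset w.toFinset
            (p := fun (y : Σ b, G b) (i : I) => y.2 ∈ i.1 y.1) (l := atTop)).2
            (fun y _ => evG y.1 y.2)
          filter_upwards [this] with i hi y hy
          exact hi y (List.mem_toFinset.2 hy)
        filter_upwards [e3, evL w.length] with i h3 h4
        rw [e2]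
        exact hA4 i w h0 h4 (fun y hy => ⟨h3 y hy, h1 y hy⟩) h2
  intro F ε hε
  have c1 : ∀ g ∈ F, ∀ᶠ i in atTop, g ≠ 1 → permDist (ψ g i) 1 > 1 - ε := by
    intro g _
    by_cases hg : g = 1
    · exact Eventually.of_forall fun i h => absurd hg h
    obtain ⟨σ, hσ, hfix⟩ := free g hg
    have h1 : Tendsto (fun i => permDist (σ i) (ψ g i)) atTop (𝓝 0) :=
      mk_eq_iff.1 (hσ.trans (hψ g).symm)
    filter_upwards [hfix, h1.eventually (gt_mem_nhds (half_pos hε)),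
      heps.eventually (gt_mem_nhds (half_pos hε))] with i h2 h3 h4 _
    have : NeZero (n i) := ⟨(hn i).ne'⟩
    have h5 : permDist (σ i) 1 = 1 - dens (fun v => σ i v = v) := by
      rw [permDist_eq, ← dens_not]
      rfl
    have h6 := permDist_triangle (σ i) (ψ g i) 1
    linarith
  have c2 : ∀ g₁ ∈ F, ∀ g₂ ∈ F, ∀ᶠ i in atTop,
      permDist (ψ (g₁⁻¹ * g₂) i) ((ψ g₁ i)⁻¹ * ψ g₂ i) < ε := by
    intro g₁ _ g₂ _
    have h1 : Tendsto (fun i => permDist (ψ (g₁⁻¹ * g₂) i) ((ψ g₁ i)⁻¹ * ψ g₂ i)) atTop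
        (𝓝 0) := by
      have : (QuotientGroup.mk (ψ (g₁⁻¹ * g₂)) : P ⧸ N) =
          QuotientGroup.mk ((ψ g₁)⁻¹ * ψ g₂) := by
        rw [QuotientGroup.mk_mul, QuotientGroup.mk_inv, hψ, hψ, hψ, map_mul, map_inv]
      exact mk_eq_iff.1 this
    exact h1.eventually (gt_mem_nhds hε)
  have c1' := (Filter.eventually_all_finset F).2 c1
  have c2' := (Filter.eventually_all_finset F).2 fun g₁ h₁ =>
    (Filter.eventually_all_finset F).2 (c2 g₁ h₁)
  obtain ⟨i, h1, h2⟩ := (c1'.and c2').exists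
  exact ⟨n i, hn i, fun g => ψ g i, h1, h2⟩

end SoficAmalgam

/-- If `Γ₁` and `Γ₂` are sofic groups and `H` is a monotileably amenable group embedded as a
common subgroup of `Γ₁` and `Γ₂`, then the free product with amalgamation `Γ₁ *_H Γ₂`
(the pushout of the inclusions `H → Γ₁` and `H → Γ₂`) is sofic. -/
theorem isSofic_amalgamatedFreeProduct {H : Type*} [Group H] [DecidableEq H]
    {G : Bool → Type*} [∀ b, Group (G b)] (φ : ∀ b, H →* G b)
    (hinj : ∀ b, Function.Injective (φ b))
    (hsofic : ∀ b, IsSofic (G b)) (hH : MonotileablyAmenable H) :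
    IsSofic (Monoid.PushoutI φ) := by
  apply SoficAmalgam.isSofic_pushout φ hinj hsofic
  convert hH
end

section
/- Let G be a sofic group, let H be a monotileably amenable subgroup of G, and let θ : H → G be an injective group homomorphism. Then the HNN extension Γ = G*_θ, i.e., the group generated by G and an extra generator t subject to the additional relations t⁻¹ht = θ(h) for all h ∈ H, is sofic. -/
open scoped Classical Pointwise

section PermDist
variable {X : Type*} [Fintype X]

lemma permDist_le_of (σ τ : Equiv.Perm X) (S : Finset X) (h : ∀ x, x ∉ S → σ x = τ x) :
    permDist σ τ ≤ S.card / Fintype.card X := by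
  unfold permDist
  gcongr
  intro x hx
  by_contra hxS
  simp only [Finset.mem_filter, Finset.mem_univ, true_and] at hx
  exact hx (h x hxS)

lemma le_permDist_of [Nonempty X] (σ τ : Equiv.Perm X) (S : Finset X)
    (h : ∀ x, x ∉ S → σ x ≠ τ x) :
    1 - S.card / Fintype.card X ≤ permDist σ τ := by
  unfold permDist
  have hX : (0 : ℝ) < Fintype.card X := by exact_mod_cast Fintype.card_pos
  rw [one_sub_div hX.ne']
  gcongr
  have : Fintype.card X ≤ (Finset.univ.filter fun x => σ x ≠ τ x).card + S.card := by
    rw [← Finset.card_univ]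
    refine le_trans (Finset.card_le_card ?_) (Finset.card_union_le _ _)
    intro x _
    by_cases hx : x ∈ S
    · simp [hx]
    · simp [h x hx]
  have h2 : (Fintype.card X : ℝ) ≤ (Finset.univ.filter fun x => σ x ≠ τ x).card + S.card := by
    exact_mod_cast this
  linarith

lemma exists_set_permDist [Nonempty X] (σ τ : Equiv.Perm X) : ∃ S : Finset X,
    (S.card : ℝ) = permDist σ τ * Fintype.card X ∧ ∀ x, x ∉ S → σ x = τ x := by
  refine ⟨Finset.univ.filter fun x => σ x ≠ τ x, ?_, ?_⟩
  · have hX : (0 : ℝ) < Fintype.card X := by exact_mod_cast Fintype.card_pos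
    unfold permDist
    field_simp
  · simp

lemma exists_set_permDist_ne [Nonempty X] (σ τ : Equiv.Perm X) : ∃ S : Finset X,
    (S.card : ℝ) = (1 - permDist σ τ) * Fintype.card X ∧ ∀ x, x ∉ S → σ x ≠ τ x := by
  refine ⟨Finset.univ.filter fun x => σ x = τ x, ?_, ?_⟩
  · have hX : (0 : ℝ) < Fintype.card X := by exact_mod_cast Fintype.card_pos
    unfold permDist
    have := Finset.card_filter_add_card_filter_not (s := (Finset.univ : Finset X)) (fun x => σ x = τ x)
    have h2 : ((Finset.univ.filter fun x => σ x = τ x).card : ℝ) +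
      (Finset.univ.filter fun x => σ x ≠ τ x).card = Fintype.card X := by
      rw [← Finset.card_univ]; exact_mod_cast this
    field_simp
    linarith
  · simp

lemma permDist_nonneg (σ τ : Equiv.Perm X) : 0 ≤ permDist σ τ := by
  unfold permDist; positivity

lemma permDist_self (σ : Equiv.Perm X) : permDist σ σ = 0 := by simp [permDist]

lemma permDist_comm (σ τ : Equiv.Perm X) : permDist σ τ = permDist τ σ := by
  simp only [permDist, ne_comm]

lemma permDist_triangle (σ τ ρ : Equiv.Perm X) :
    permDist σ ρ ≤ permDist σ τ + permDist τ ρ := by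
  unfold permDist
  rw [← add_div]
  gcongr
  norm_cast
  refine le_trans (Finset.card_le_card ?_) (Finset.card_union_le _ _)
  intro x hx
  simp only [Finset.mem_filter, Finset.mem_univ, true_and, Finset.mem_union] at hx ⊢
  by_contra! h
  exact hx (h.1.trans h.2)

lemma permDist_mul_left (ρ σ τ : Equiv.Perm X) :
    permDist (ρ * σ) (ρ * τ) = permDist σ τ := by
  simp [permDist]

lemma permDist_mul_right (ρ σ τ : Equiv.Perm X) :
    permDist (σ * ρ) (τ * ρ) = permDist σ τ := by
  unfold permDist
  congr 2
  refine Finset.card_bij (fun x _ => ρ x) ?_ ?_ ?_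
  · intro a ha
    simp only [Finset.mem_filter, Finset.mem_univ, true_and] at ha ⊢
    exact ha
  · simp
  · intro b hb
    simp only [Finset.mem_filter, Finset.mem_univ, true_and] at hb
    refine ⟨ρ⁻¹ b, ?_, by simp⟩
    simp only [Finset.mem_filter, Finset.mem_univ, true_and]
    simpa using hb

lemma permDist_inv_one (σ : Equiv.Perm X) : permDist σ⁻¹ 1 = permDist σ 1 := by
  rw [← permDist_mul_left σ]; simp [permDist_comm]

lemma permDist_permCongr {Y : Type*} [Fintype Y] (e : X ≃ Y) (σ τ : Equiv.Perm X) :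
    permDist (e.permCongrHom σ) (e.permCongrHom τ) = permDist σ τ := by
  unfold permDist
  congr 2
  · symm
    refine Finset.card_bij (fun x _ => e x) ?_ ?_ ?_
    · simp [Equiv.permCongrHom]
    · simp
    · intro b hb
      exact ⟨e.symm b, by simpa [Equiv.permCongrHom] using hb, by simp⟩
  · exact (Fintype.card_congr e).symm

end PermDist

/-- A partial injection of a finite type extends to a permutation. -/
lemma exists_perm_extend {X : Type*} [Fintype X] (s : Set X) (f : X → X) (hf : Set.InjOn f s) :
    ∃ σ : Equiv.Perm X, ∀ x ∈ s, σ x = f x := by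
  obtain ⟨g, hg⟩ := Set.MapsTo.exists_equiv_extend_of_card_eq (α := X) (β := X) (s := s)
    (t := Finset.univ) (f := f) (by simp) (by intro x _; simp) hf
  exact ⟨g.trans (Equiv.subtypeUnivEquiv (by simp)), fun x hx => by simpa using hg x hx⟩

/-- Free groups of finite rank have finite quotients that are injective on balls. -/
lemma exists_finite_quotient (Y : Type) [Finite Y] (N : ℕ) :
    ∃ (W : Type) (_ : Fintype W) (f : FreeGroup Y →* Equiv.Perm W),
      ∀ g : FreeGroup Y, g.norm ≤ N → f g = 1 → g = 1 := by
  have hfin : Finite {g : FreeGroup Y // g.norm ≤ N} := by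
    have : Set.Finite {g : FreeGroup Y | g.norm ≤ N} := by
      refine Set.Finite.of_finite_image (f := FreeGroup.toWord)
        ((List.finite_length_le (Y × Bool) N).subset ?_) (FreeGroup.toWord_injective.injOn)
      rintro _ ⟨g, hg, rfl⟩
      exact hg
    exact this
  let W := {g : FreeGroup Y // g.norm ≤ N}
  have : Fintype W := Fintype.ofFinite W
  let one : W := ⟨1, by simp⟩
  have hc : ∀ y : Y, ∃ σ : Equiv.Perm W, ∀ w w' : W, (w' : FreeGroup Y) = FreeGroup.of y * w → σ w = w' := by
    intro y
    let f : W → W := fun w => if h : (FreeGroup.of y * w : FreeGroup Y).norm ≤ N then ⟨_, h⟩ else w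
    obtain ⟨σ, hσ⟩ := exists_perm_extend {w : W | (FreeGroup.of y * w : FreeGroup Y).norm ≤ N} f (by
      intro a ha b hb hab
      simp only [Set.mem_ofPred_eq] at ha hb
      simp only [f, ha, hb, dite_true] at hab
      have := congrArg Subtype.val hab
      exact Subtype.ext (mul_left_cancel this))
    refine ⟨σ, fun w w' h => ?_⟩
    have hw : (FreeGroup.of y * w : FreeGroup Y).norm ≤ N := h ▸ w'.2
    rw [hσ w hw]
    simp only [f, hw, dite_true]
    exact Subtype.ext h.symm
  choose c hc using hc
  let F : FreeGroup Y →* Equiv.Perm W := FreeGroup.lift c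
  have key : ∀ L : List (Y × Bool), L.length ≤ N →
      (F (FreeGroup.mk L) one : FreeGroup Y) = FreeGroup.mk L := by
    intro L
    induction L with
    | nil => intro h; rfl
    | cons a L ih =>
      intro hl
      obtain ⟨y, b⟩ := a
      have hl' : L.length ≤ N := by simp at hl; omega
      have h' : (FreeGroup.mk ((y, b) :: L)).norm ≤ N := FreeGroup.norm_mk_le.trans hl
      have e : FreeGroup.mk ((y, b) :: L) = FreeGroup.mk [(y, b)] * FreeGroup.mk L := by
        simp [FreeGroup.mul_mk]
      let w' : W := ⟨FreeGroup.mk ((y, b) :: L), h'⟩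
      suffices h : F (FreeGroup.mk ((y, b) :: L)) one = w' from congrArg Subtype.val h
      rw [e, map_mul, Equiv.Perm.mul_apply]
      have ih := ih hl'
      cases b
      · have e2 : FreeGroup.mk [(y, false)] = (FreeGroup.of y)⁻¹ := rfl
        rw [e2] at e ⊢
        rw [map_inv, Equiv.Perm.inv_eq_iff_eq]
        simp only [F, FreeGroup.lift_apply_of]
        symm
        apply hc
        rw [ih]
        simp [w', e]
      · have e2 : FreeGroup.mk [(y, true)] = (FreeGroup.of y) := rfl
        rw [e2] at e ⊢
        simp only [F, FreeGroup.lift_apply_of]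
        apply hc
        rw [ih, ← e]
  refine ⟨W, inferInstance, F, fun g hg h1 => ?_⟩
  have := key g.toWord hg
  rw [FreeGroup.mk_toWord, h1] at this
  simpa [one] using this.symm


/-- The permutation defined by a word. -/
def evalWord {G M : Type*} [Group M] (ψ : G → M) (τ : M) (head : G) (l : List (ℤˣ × G)) : M :=
  ψ head * (l.map (fun x => τ ^ (x.1 : ℤ) * ψ x.2)).prod

/-- Finite approximations of an HNN extension. -/
def HasApprox {G : Type*} [Group G] (A B : Subgroup G) (φ : A ≃* B) (K : Finset G) (N : ℕ) : Prop :=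
  ∃ (Z : Type) (_ : Fintype Z) (_ : Nonempty Z) (ψ : G → Equiv.Perm Z) (τ : Equiv.Perm Z),
    (∀ g ∈ K, ∀ h ∈ K, permDist (ψ (g * h)) (ψ g * ψ h) ≤ 1 / (N + 1 : ℝ)) ∧
    (∀ a : A, (a : G) ∈ K → (φ a : G) ∈ K →
      permDist (τ * ψ a) (ψ (φ a) * τ) ≤ 1 / (N + 1 : ℝ)) ∧
    (∀ (head : G) (l : List (ℤˣ × G)), head ∈ K → (∀ x ∈ l, x.2 ∈ K) → l.length ≤ N →
      l.IsChain (fun a b => a.2 ∈ HNNExtension.toSubgroup A B a.1 → a.1 = b.1) →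
      (l = [] → head ≠ 1) →
      1 - 1 / (N + 1 : ℝ) ≤ permDist (evalWord ψ τ head l) 1)

/-- The normal subgroup of null sequences. -/
def permNullSubgroup {I : Type*} (f : Filter I) (Z : I → Type) [∀ i, Fintype (Z i)] :
    Subgroup (∀ i, Equiv.Perm (Z i)) where
  carrier := {σ | Filter.Tendsto (fun i => permDist (σ i) 1) f (nhds 0)}
  one_mem' := by simp [permDist_self, tendsto_const_nhds]
  mul_mem' := by
    intro σ τ hσ hτ
    have := Filter.Tendsto.add hσ hτ
    rw [add_zero] at this
    refine squeeze_zero (fun i => permDist_nonneg _ _) (fun i => ?_) this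
    refine (permDist_triangle _ (σ i) _).trans ?_
    rw [add_comm]
    gcongr
    rw [Pi.mul_apply]
    conv_lhs => rw [← mul_one (σ i)]
    rw [mul_assoc, one_mul, permDist_mul_left]
  inv_mem' := by
    intro σ hσ
    simpa [permDist_inv_one] using hσ

instance {I : Type*} (f : Filter I) (Z : I → Type) [∀ i, Fintype (Z i)] :
    (permNullSubgroup f Z).Normal where
  conj_mem := by
    intro σ hσ τ
    refine Filter.Tendsto.congr (fun i => ?_) hσ
    rw [Pi.mul_apply, Pi.mul_apply, ← permDist_mul_right (τ i)⁻¹, ← permDist_mul_left (τ i)]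
    simp [mul_assoc]

lemma mk_eq_iff {I : Type*} (f : Filter I) (Z : I → Type) [∀ i, Fintype (Z i)]
    (σ τ : ∀ i, Equiv.Perm (Z i)) :
    (QuotientGroup.mk σ : (∀ i, Equiv.Perm (Z i)) ⧸ permNullSubgroup f Z) = QuotientGroup.mk τ ↔
    Filter.Tendsto (fun i => permDist (σ i) (τ i)) f (nhds 0) := by
  rw [QuotientGroup.eq]
  change Filter.Tendsto _ f (nhds 0) ↔ _
  refine Filter.tendsto_congr fun i => ?_
  rw [← permDist_mul_left (σ i)]
  simp [permDist_comm]

theorem sofic_of_hasApprox {G : Type*} [Group G] (A B : Subgroup G) (φ : A ≃* B)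
    (H : ∀ K N, HasApprox A B φ K N) : IsSofic (HNNExtension G A B φ) := by
  let I := Finset G × ℕ
  choose Z hfin hne ψ τ ha hb hc using fun i : I => H i.1 i.2
  let f : Filter I := Filter.atTop
  have hlim : Filter.Tendsto (fun i : I => 1 / (i.2 + 1 : ℝ)) f (nhds 0) := by
    have h1 : Filter.Tendsto (fun i : I => i.2) f Filter.atTop := by
      refine Filter.tendsto_atTop.2 fun n => ?_
      filter_upwards [Filter.eventually_ge_atTop ((∅, n) : I)] with i hi
      exact hi.2
    exact tendsto_one_div_add_atTop_nhds_zero_nat.comp h1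
  have hmem : ∀ g : G, ∀ᶠ i : I in f, g ∈ i.1 := by
    intro g
    filter_upwards [Filter.eventually_ge_atTop (({g}, 0) : I)] with i hi
    exact hi.1 (by simp)
  have hlen : ∀ n : ℕ, ∀ᶠ i : I in f, n ≤ i.2 := by
    intro n
    filter_upwards [Filter.eventually_ge_atTop ((∅, n) : I)] with i hi
    exact hi.2
  have hnull : ∀ σ ρ : ∀ i, Equiv.Perm (Z i), (∀ᶠ i in f, permDist (σ i) (ρ i) ≤ 1 / (i.2 + 1 : ℝ)) →
      (QuotientGroup.mk σ : (∀ i, Equiv.Perm (Z i)) ⧸ permNullSubgroup f Z) = QuotientGroup.mk ρ := by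
    intro σ ρ h
    rw [mk_eq_iff]
    exact squeeze_zero' (Filter.Eventually.of_forall fun i => permDist_nonneg _ _) h hlim
  let Q := (∀ i, Equiv.Perm (Z i)) ⧸ permNullSubgroup f Z
  let q : (∀ i, Equiv.Perm (Z i)) →* Q := QuotientGroup.mk' _
  let F : G →* Q := MonoidHom.mk' (fun g => q (fun i => ψ i g)) (by
    intro g h
    rw [← map_mul]
    apply hnull
    filter_upwards [hmem g, hmem h] with i h1 h2
    exact ha i g h1 h h2)
  let x : Q := q τ
  let L : HNNExtension G A B φ →* Q := HNNExtension.lift F x (by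
    intro a
    change q τ * q _ = q _ * q τ
    rw [← map_mul, ← map_mul]
    apply hnull
    filter_upwards [hmem a, hmem (φ a)] with i h1 h2
    exact hb i a h1 h2)
  have hq : Function.Surjective q := QuotientGroup.mk'_surjective _
  choose Φ hΦ using fun γ => hq (L γ)
  have h2 : ∀ g₁ g₂ : HNNExtension G A B φ, Filter.Tendsto
      (fun i => permDist (Φ (g₁⁻¹ * g₂) i) ((Φ g₁ i)⁻¹ * Φ g₂ i)) f (nhds 0) := by
    intro g₁ g₂
    refine (mk_eq_iff f Z (Φ (g₁⁻¹ * g₂)) ((Φ g₁)⁻¹ * Φ g₂)).1 ?_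
    change q _ = q _
    rw [map_mul, map_inv, hΦ, hΦ, hΦ, map_mul, map_inv]
  have h1 : ∀ g : HNNExtension G A B φ, g ≠ 1 → Filter.Tendsto
      (fun i => permDist (Φ g i) 1) f (nhds 1) := by
    intro g hg
    obtain ⟨d⟩ := HNNExtension.NormalWord.TransversalPair.nonempty G A B
    obtain ⟨w, hw⟩ : ∃ w : HNNExtension.NormalWord d, w.prod φ = g :=
      (HNNExtension.NormalWord.equiv φ d).symm.surjective g
    have e1 : ∀ l : List (ℤˣ × G), L (l.map (fun x => HNNExtension.t ^ (x.1 : ℤ) * HNNExtension.of x.2)).prod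
        = q (fun i => (l.map (fun x => τ i ^ (x.1 : ℤ) * ψ i x.2)).prod) := by
      intro l
      induction l with
      | nil => simp; rfl
      | cons a l ih =>
        simp only [List.map_cons, List.prod_cons]
        rw [map_mul, ih, map_mul, map_zpow]
        simp only [L, HNNExtension.lift_t, HNNExtension.lift_of]
        change q τ ^ _ * q _ * _ = _
        rw [← map_zpow, ← map_mul, ← map_mul]
        rfl
    have e2 : L g = q (fun i => evalWord (ψ i) (τ i) w.head w.toList) := by
      rw [← hw, HNNExtension.NormalWord.ReducedWord.prod, map_mul, e1]
      simp only [L, HNNExtension.lift_of]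
      change q _ * _ = _
      rw [← map_mul]
      rfl
    have e3 : Filter.Tendsto (fun i => permDist (Φ g i) (evalWord (ψ i) (τ i) w.head w.toList)) f (nhds 0) :=
      (mk_eq_iff f Z (Φ g) _).1 ((hΦ g).trans e2)
    have e4 : ∀ᶠ i in f, 1 - 1 / (i.2 + 1 : ℝ) ≤ permDist (evalWord (ψ i) (τ i) w.head w.toList) 1 := by
      have m1 : ∀ᶠ i : I in f, ∀ x ∈ w.toList.toFinset, x.2 ∈ i.1 := by
        rw [Filter.eventually_all_finset]
        intro x _
        exact hmem _
      filter_upwards [hmem w.head, m1, hlen w.toList.length] with i i1 i2 i3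
      refine hc i _ _ i1 (fun x hx => i2 x (by simpa using hx)) i3 w.chain ?_
      intro hl hh
      apply hg
      rw [← hw, HNNExtension.NormalWord.ReducedWord.prod, hl, hh]
      simp
    have e5 : Filter.Tendsto (fun i : I => 1 - 1 / (i.2 + 1 : ℝ) -
      permDist (Φ g i) (evalWord (ψ i) (τ i) w.head w.toList)) f (nhds 1) := by
      have := (tendsto_const_nhds (x := (1 : ℝ)) (f := f)).sub hlim |>.sub e3
      simpa using this
    refine tendsto_of_tendsto_of_tendsto_of_le_of_le' e5 tendsto_const_nhds ?_ ?_
    · filter_upwards [e4] with i hi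
      have := permDist_triangle (evalWord (ψ i) (τ i) w.head w.toList) (Φ g i) 1
      rw [permDist_comm _ (Φ g i)] at this
      linarith
    · refine Filter.Eventually.of_forall fun i => ?_
      have := permDist_le_of (Φ g i) 1 Finset.univ (by simp)
      refine this.trans ?_
      rw [Finset.card_univ]
      exact div_self_le_one _
  intro S ε hε
  have c1 : ∀ᶠ i in f, ∀ g ∈ S, g ≠ 1 → permDist (Φ g i) 1 > 1 - ε := by
    rw [Filter.eventually_all_finset]
    intro g _
    by_cases hg : g = 1
    · simp [hg]
    · filter_upwards [(h1 g hg).eventually (lt_mem_nhds (by linarith : 1 - ε < 1))] with i hi _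
      exact hi
  have c2 : ∀ᶠ i in f, ∀ g₁ ∈ S, ∀ g₂ ∈ S,
      permDist (Φ (g₁⁻¹ * g₂) i) ((Φ g₁ i)⁻¹ * Φ g₂ i) < ε := by
    rw [Filter.eventually_all_finset]
    intro g _
    rw [Filter.eventually_all_finset]
    intro g' _
    exact (h2 g g').eventually (gt_mem_nhds hε)
  obtain ⟨i, i1, i2⟩ := (c1.and c2).exists
  let e := Fintype.equivFin (Z i)
  refine ⟨Fintype.card (Z i), Fintype.card_pos, fun g => e.permCongrHom (Φ g i), ?_, ?_⟩
  · intro g hg hg1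
    rw [← map_one e.permCongrHom]
    convert i1 g hg hg1 using 1
    exact permDist_permCongr e _ _
  · intro g hg g' hg'
    rw [← map_inv, ← map_mul]
    exact lt_of_eq_of_lt (permDist_permCongr e _ _) (i2 g hg g' hg')


/-- Approximations of the base group, with a partially intertwining permutation `τ₀`
and a labelling `y` of approximate orbits of the associated subgroup. -/
def HasPre {G : Type*} [Group G] (A B : Subgroup G) (φ : A ≃* B) (K : Finset G) (ε : ℝ) : Prop :=
  ∃ (P Y : Type) (_ : Fintype P) (_ : Nonempty P) (_ : Finite Y) (ψ : G → Equiv.Perm P)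
    (τ₀ : Equiv.Perm P) (y : P → Y) (bad : Finset P),
    (bad.card : ℝ) ≤ ε * Fintype.card P ∧
    (∀ p, p ∉ bad → ∀ g ∈ K, ∀ h ∈ K, ψ (g * h) p = ψ g (ψ h p)) ∧
    (∀ p, p ∉ bad → ∀ g ∈ K, ψ g p = p → g = 1) ∧
    (∀ a : A, (a : G) ∈ K → (φ a : G) ∈ K → ∃ S : Finset P, (S.card : ℝ) ≤ ε * Fintype.card P ∧
      ∀ p, p ∉ S → τ₀ (ψ a p) = ψ (φ a) (τ₀ p) ∧ y (ψ a p) = y p) ∧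
    (∀ p g, p ∉ bad → ψ g p ∉ bad → g ∈ K → y (ψ g p) = y p → g ∈ A) ∧
    (∀ p p₂ g, p ∉ bad → p₂ ∉ bad → g ∈ K → y p₂ = y p → τ₀ p₂ = ψ g (τ₀ p) → g ∈ B)

lemma card_prod_div {P Q : Type*} [Fintype P] [Fintype Q] [Nonempty P] [Nonempty Q] (S : Finset P) (ε : ℝ)
    (h : (S.card : ℝ) ≤ ε * Fintype.card P) :
    ((S ×ˢ (Finset.univ : Finset Q)).card : ℝ) / Fintype.card (P × Q) ≤ ε := by
  have hP : (0 : ℝ) < Fintype.card P := by exact_mod_cast Fintype.card_pos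
  have hQ : (0 : ℝ) < Fintype.card Q := by exact_mod_cast Fintype.card_pos
  rw [Finset.card_product, Fintype.card_prod, Finset.card_univ]
  push_cast
  rw [div_le_iff₀ (by positivity)]
  nlinarith

/-- Skew product permutation. -/
def skew {P Q : Type*} [Group Q] (σ : Equiv.Perm P) (c : P → Q) : Equiv.Perm (P × Q) where
  toFun z := (σ z.1, c z.1 * z.2)
  invFun z := (σ⁻¹ z.1, (c (σ⁻¹ z.1))⁻¹ * z.2)
  left_inv z := by simp
  right_inv z := by simp

lemma skew_apply {P Q : Type*} [Group Q] (σ : Equiv.Perm P) (c : P → Q) (p : P) (q : Q) :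
    skew σ c (p, q) = (σ p, c p * q) := rfl

lemma skew_inv_apply {P Q : Type*} [Group Q] (σ : Equiv.Perm P) (c : P → Q) (p : P) (q : Q) :
    (skew σ c)⁻¹ (p, q) = (σ⁻¹ p, (c (σ⁻¹ p))⁻¹ * q) := rfl

/-- The source point of the `τ₀`-edge, in terms of the point after the step. -/
def srcPt {P : Type*} (τ₀ : Equiv.Perm P) (u : ℤˣ) (p : P) : P := if u = 1 then τ₀⁻¹ p else p

theorem word_trajectory {G : Type*} [Group G] (A B : Subgroup G) (K : Finset G)
    {P Y Q : Type} [Fintype P] [Group Q] [Fintype Q]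
    (ψ : G → Equiv.Perm P) (τ₀ : Equiv.Perm P) (y : P → Y) (bad : Finset P)
    (f : FreeGroup Y →* Q)
    (hA : ∀ p g, p ∉ bad → ψ g p ∉ bad → g ∈ K → y (ψ g p) = y p → g ∈ A)
    (hB : ∀ p p₂ g, p ∉ bad → p₂ ∉ bad → g ∈ K → y p₂ = y p → τ₀ p₂ = ψ g (τ₀ p) → g ∈ B)
    (l : List (ℤˣ × G)) (hK : ∀ x ∈ l, x.2 ∈ K)
    (hl : l.IsChain (fun a b => a.2 ∈ HNNExtension.toSubgroup A B a.1 → a.1 = b.1)) :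
    ∃ S : Finset (P × Q), S.card ≤ l.length * (bad.card * Fintype.card Q) ∧
      ∀ p q, (p, q) ∉ S → ∃ (L : List (Y × Bool)) (p' : P), L.length = l.length ∧
        FreeGroup.IsReduced L ∧
        (l.map (fun x => (skew τ₀ (fun p => f (FreeGroup.of (y p)))) ^ (x.1 : ℤ) *
          skew (ψ x.2) (fun _ => (1 : Q)))).prod (p, q) = (p', f (FreeGroup.mk L) * q) ∧
        ∀ x ∈ l.head?, L.head? = some (y (srcPt τ₀ x.1 p'), decide (x.1 = 1)) ∧
          srcPt τ₀ x.1 p' ∉ bad := by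
  induction l with
  | nil =>
    refine ⟨∅, by simp, fun p q _ => ⟨[], p, rfl, FreeGroup.IsReduced.nil, ?_, by simp⟩⟩
    simp [← FreeGroup.one_eq_mk]
  | cons a l ih =>
    obtain ⟨S, hS, hS'⟩ := ih (fun x hx => hK x (List.mem_cons_of_mem _ hx)) (List.isChain_cons.1 hl).2
    obtain ⟨u, g⟩ := a
    have hg : g ∈ K := hK (u, g) (by simp)
    set T := skew τ₀ (fun p => f (FreeGroup.of (y p))) with hT
    set R := (l.map (fun x => T ^ (x.1 : ℤ) * skew (ψ x.2) (fun _ => (1 : Q)))).prod with hR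
    set M := T ^ (u : ℤ) * skew (ψ g) (fun _ => (1 : Q)) * R with hM
    let V : Equiv.Perm (P × Q) := (if u = 1 then T⁻¹ else 1) * M
    let S₁ : Finset (P × Q) := (bad ×ˢ (Finset.univ : Finset Q)).map V⁻¹.toEmbedding
    have hS₁ : ∀ z, z ∉ S₁ → (V z).1 ∉ bad := by
      intro z hz hb
      apply hz
      simp only [S₁, Finset.mem_map, Equiv.coe_toEmbedding]
      exact ⟨V z, by simp [hb], by simp⟩
    refine ⟨S ∪ S₁, ?_, ?_⟩
    · refine (Finset.card_union_le _ _).trans ?_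
      simp only [S₁, Finset.card_map, Finset.card_product, Finset.card_univ, List.length_cons]
      linarith
    · intro p q hpq
      rw [Finset.mem_union, not_or] at hpq
      obtain ⟨L, p', hLl, hLr, hRe, hhead⟩ := hS' p q hpq.1
      have hV := hS₁ _ hpq.2
      have hprod : (((u, g) :: l).map (fun x => T ^ (x.1 : ℤ) * skew (ψ x.2) (fun _ => (1 : Q)))).prod = M := by
        simp [hM, hR]
      rw [hprod]
      rcases Int.units_eq_one_or u with rfl | rfl
      · have hMe : M (p, q) = (τ₀ (ψ g p'), f (FreeGroup.of (y (ψ g p'))) * (f (FreeGroup.mk L) * q)) := by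
          simp [hM, Equiv.Perm.mul_apply, hRe, skew_apply, hT]
        have hVe : (V (p, q)).1 = ψ g p' := by
          simp only [V, if_true, Equiv.Perm.mul_apply, hMe]
          rw [hT, skew_inv_apply]; simp
        rw [hVe] at hV
        refine ⟨(y (ψ g p'), true) :: L, τ₀ (ψ g p'), by simp [hLl], ?_, ?_, ?_⟩
        · refine List.isChain_cons.2 ⟨?_, hLr⟩
          rintro ⟨y', b⟩ hy' hyy
          simp only at hyy
          cases l with
          | nil => 
            have : L = [] := List.length_eq_zero_iff.1 (by simpa using hLl)
            simp [this] at hy'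
          | cons x l' =>
            obtain ⟨u', g'⟩ := x
            obtain ⟨h1, h2⟩ := hhead (u', g') (by simp)
            rw [h1] at hy'
            simp only [Option.mem_def, Option.some.injEq, Prod.mk.injEq] at hy'
            obtain ⟨hy1, rfl⟩ := hy'
            have hch := (List.isChain_cons.1 hl).1 (u', g') (by simp)
            rcases Int.units_eq_one_or u' with rfl | rfl
            · simp
            · exfalso
              simp only [srcPt] at h2 hy1
              rw [if_neg (by decide)] at h2 hy1
              have hgA := hA p' g h2 hV hg (hyy.trans hy1.symm)
              have : (1 : ℤˣ) = -1 := hch hgA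
              exact absurd this (by decide)
        · rw [hMe]
          have : FreeGroup.mk ((y (ψ g p'), true) :: L) = FreeGroup.of (y (ψ g p')) * FreeGroup.mk L := by
            simp [FreeGroup.of, FreeGroup.mul_mk]
          rw [this, map_mul, mul_assoc]
        · simp [srcPt, hV]
      · have hMe : M (p, q) = (τ₀⁻¹ (ψ g p'), (f (FreeGroup.of (y (τ₀⁻¹ (ψ g p')))))⁻¹ * (f (FreeGroup.mk L) * q)) := by
          simp only [hM, Equiv.Perm.mul_apply, hRe, skew_apply, hT, Units.val_neg, Units.val_one, zpow_neg, zpow_one, skew_inv_apply, one_mul]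
        have hVe : (V (p, q)).1 = τ₀⁻¹ (ψ g p') := by
          simp only [V]
          rw [if_neg (by decide), one_mul, hMe]
        rw [hVe] at hV
        refine ⟨(y (τ₀⁻¹ (ψ g p')), false) :: L, τ₀⁻¹ (ψ g p'), by simp [hLl], ?_, ?_, ?_⟩
        · refine List.isChain_cons.2 ⟨?_, hLr⟩
          rintro ⟨y', b⟩ hy' hyy
          simp only at hyy
          cases l with
          | nil => 
            have : L = [] := List.length_eq_zero_iff.1 (by simpa using hLl)
            simp [this] at hy'
          | cons x l' =>
            obtain ⟨u', g'⟩ := x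
            obtain ⟨h1, h2⟩ := hhead (u', g') (by simp)
            rw [h1] at hy'
            simp only [Option.mem_def, Option.some.injEq, Prod.mk.injEq] at hy'
            obtain ⟨hy1, rfl⟩ := hy'
            have hch := (List.isChain_cons.1 hl).1 (u', g') (by simp)
            rcases Int.units_eq_one_or u' with rfl | rfl
            · exfalso
              simp only [srcPt, if_true] at h2 hy1
              have hgB := hB _ _ g h2 hV hg (hyy.trans hy1.symm) (by simp)
              have : (-1 : ℤˣ) = 1 := hch hgB
              exact absurd this (by decide)
            · simp
        · rw [hMe]
          have : FreeGroup.mk ((y (τ₀⁻¹ (ψ g p')), false) :: L) = (FreeGroup.of (y (τ₀⁻¹ (ψ g p'))))⁻¹ * FreeGroup.mk L := by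
            simp [FreeGroup.of, FreeGroup.mul_mk, FreeGroup.inv_mk, FreeGroup.invRev]
          rw [this, map_mul, map_inv, mul_assoc]
        · intro x hx
          simp only [List.head?_cons, Option.mem_def, Option.some.injEq] at hx
          subst hx
          simp only [srcPt]
          rw [if_neg (by decide)]
          refine ⟨?_, hV⟩
          simp

theorem hasApprox_of_hasPre {G : Type*} [Group G] (A B : Subgroup G) (φ : A ≃* B)
    (K : Finset G) (N : ℕ) (H : HasPre A B φ K (1 / (N + 1 : ℝ) ^ 2)) :
    HasApprox A B φ K N := by
  obtain ⟨P, Y, _, _, _, ψ, τ₀, y, bad, hbad, ha, ha', hb, hA, hB⟩ := H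
  obtain ⟨W, _, f, hf⟩ := exists_finite_quotient Y N
  have hN : (1 : ℝ) ≤ N + 1 := by simp
  have hε : 1 / (N + 1 : ℝ) ^ 2 ≤ 1 / (N + 1 : ℝ) := by
    gcongr
    nlinarith
  refine ⟨P × Equiv.Perm W, inferInstance, inferInstance, fun g => skew (ψ g) (fun _ => 1),
    skew τ₀ (fun p => f (FreeGroup.of (y p))), ?_, ?_, ?_⟩
  · intro g hg h hh
    refine (permDist_le_of _ _ (bad ×ˢ Finset.univ) ?_).trans ((card_prod_div _ _ hbad).trans hε)
    rintro ⟨p, q⟩ hpq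
    have hp : p ∉ bad := by simpa using hpq
    simp [skew_apply, ha p hp g hg h hh]
  · intro a h1 h2
    obtain ⟨S, hS, hS'⟩ := hb a h1 h2
    refine (permDist_le_of _ _ (S ×ˢ Finset.univ) ?_).trans ((card_prod_div _ _ hS).trans hε)
    rintro ⟨p, q⟩ hpq
    have hp : p ∉ S := by simpa using hpq
    simp [skew_apply, hS' p hp]
  · intro head l hhead hlK hlN hchain hnil
    by_cases hl : l = []
    · subst hl
      refine le_trans ?_ (le_permDist_of _ _ (bad ×ˢ Finset.univ) ?_)
      · have := card_prod_div (Q := Equiv.Perm W) _ _ hbad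
        linarith
      · rintro ⟨p, q⟩ hpq
        have hp : p ∉ bad := by simpa using hpq
        simp only [evalWord, List.map_nil, List.prod_nil, mul_one, skew_apply, Equiv.Perm.one_apply,
          ne_eq, Prod.mk.injEq, not_and]
        intro h
        exact absurd (ha' p hp head hhead h) (hnil rfl)
    · obtain ⟨S, hS, hS'⟩ := word_trajectory A B K (Q := Equiv.Perm W) ψ τ₀ y bad f hA hB l hlK hchain
      refine le_trans ?_ (le_permDist_of _ _ S ?_)
      · have hP : (0 : ℝ) < Fintype.card P := by exact_mod_cast Fintype.card_pos
        have hQ : (0 : ℝ) < Fintype.card (Equiv.Perm W) := by exact_mod_cast Fintype.card_pos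
        have h1 : (S.card : ℝ) ≤ l.length * (bad.card * Fintype.card (Equiv.Perm W)) := by
          exact_mod_cast hS
        have h2 : (l.length : ℝ) ≤ N + 1 := by
          have : (l.length : ℝ) ≤ N := by exact_mod_cast hlN
          linarith
        have h3 : (S.card : ℝ) / Fintype.card (P × Equiv.Perm W) ≤ 1 / (N + 1 : ℝ) := by
          rw [Fintype.card_prod]
          push_cast
          rw [div_le_iff₀ (by positivity)]
          refine h1.trans ?_
          calc (l.length * (bad.card * Fintype.card (Equiv.Perm W)) : ℝ)
              ≤ (N + 1) * ((1 / (N + 1 : ℝ) ^ 2 * Fintype.card P) * Fintype.card (Equiv.Perm W)) := by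
                gcongr
            _ = _ := by field_simp
        linarith
      · rintro ⟨p, q⟩ hpq
        obtain ⟨L, p', hLl, hLr, hRe, -⟩ := hS' p q hpq
        simp only [evalWord, Equiv.Perm.mul_apply, Equiv.Perm.one_apply]
        rw [hRe, skew_apply]
        intro h
        have h2 := (Prod.mk.inj h).2
        rw [one_mul, mul_eq_right] at h2
        have h3 := hf _ (FreeGroup.norm_mk_le.trans (hLl.le.trans hlN)) h2
        have h4 : (FreeGroup.mk L).toWord = [] := by rw [h3]; simp
        rw [FreeGroup.toWord_mk, hLr.reduce_eq] at h4
        apply hl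
        rw [← List.length_eq_zero_iff, ← hLl, h4, List.length_nil]


/-- `x` is a good point for the quasi-action `ψ`, with respect to the finite set `D`. -/
def GoodPt {G X : Type*} [Group G] (ψ : G → Equiv.Perm X) (D : Finset G) (x : X) : Prop :=
  (∀ g ∈ D, ∀ h ∈ D, ψ (g * h) x = ψ g (ψ h x)) ∧
  (∀ g ∈ D, ∀ h ∈ D, ψ g x = ψ h x → g = h)

theorem sofic_good {G : Type*} [Group G] (hG : IsSofic G) (D : Finset G) (δ : ℝ) (hδ : 0 < δ) :
    ∃ n : ℕ, 0 < n ∧ ∃ ψ : G → Equiv.Perm (Fin n), ∃ S : Finset (Fin n), (S.card : ℝ) ≤ δ * n ∧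
      ∀ x, x ∉ S → GoodPt ψ D x := by
  set m : ℝ := (((D ×ˢ D).card : ℕ) : ℝ) with hm
  have hm0 : 0 ≤ m := by positivity
  set ε := δ / (5 * m + 1) with hε
  have hε0 : 0 < ε := by positivity
  obtain ⟨n, hn, ψ, h1, h2⟩ := hG (D ∪ D⁻¹ ∪ {1} ∪ D⁻¹ * D) ε hε0
  have : NeZero n := ⟨hn.ne'⟩
  have hnn : (0 : ℝ) < n := by exact_mod_cast hn
  have m1 : (1 : G) ∈ D ∪ D⁻¹ ∪ {1} ∪ D⁻¹ * D := by simp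
  have key : ∀ p ∈ D ×ˢ D, ∃ S : Finset (Fin n), (S.card : ℝ) ≤ 5 * ε * n ∧ ∀ x, x ∉ S →
      ψ (p.1 * p.2) x = ψ p.1 (ψ p.2 x) ∧ (ψ p.1 x = ψ p.2 x → p.1 = p.2) := by
    rintro ⟨g, h⟩ hp
    simp only [Finset.mem_product] at hp
    obtain ⟨hg, hh⟩ := hp
    have mg : g ∈ D ∪ D⁻¹ ∪ {1} ∪ D⁻¹ * D := by simp [hg]
    have mgi : g⁻¹ ∈ D ∪ D⁻¹ ∪ {1} ∪ D⁻¹ * D := by simp [hg]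
    have mh : h ∈ D ∪ D⁻¹ ∪ {1} ∪ D⁻¹ * D := by simp [hh]
    have mgh : g⁻¹ * h ∈ D ∪ D⁻¹ ∪ {1} ∪ D⁻¹ * D := by
      apply Finset.mem_union_right
      exact Finset.mul_mem_mul (by simpa using hg) hh
    have d1 : permDist (ψ 1) 1 < ε := by simpa using h2 1 m1 1 m1
    have d2 : permDist (ψ g⁻¹) ((ψ g)⁻¹ * ψ 1) < ε := by simpa using h2 g mg 1 m1
    have d3 : permDist ((ψ g)⁻¹ * ψ 1) (ψ g)⁻¹ < ε := by
      have := permDist_mul_left (ψ g)⁻¹ (ψ 1) 1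
      rw [mul_one] at this
      rw [this]; exact d1
    have d4 : permDist (ψ g⁻¹) (ψ g)⁻¹ < 2 * ε := by
      have := permDist_triangle (ψ g⁻¹) ((ψ g)⁻¹ * ψ 1) (ψ g)⁻¹
      linarith
    have d5 : permDist (ψ g⁻¹)⁻¹ (ψ g) < 2 * ε := by
      rw [← permDist_mul_left (ψ g⁻¹), ← permDist_mul_right (ψ g)⁻¹]
      simpa [mul_assoc, permDist_comm] using d4
    have d6 : permDist (ψ (g * h)) ((ψ g⁻¹)⁻¹ * ψ h) < ε := by simpa using h2 g⁻¹ mgi h mh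
    have d7 : permDist (ψ (g * h)) (ψ g * ψ h) < 3 * ε := by
      have := permDist_triangle (ψ (g * h)) ((ψ g⁻¹)⁻¹ * ψ h) (ψ g * ψ h)
      rw [permDist_mul_right] at this
      linarith
    obtain ⟨S₁, hS₁, hS₁'⟩ := exists_set_permDist (ψ (g * h)) (ψ g * ψ h)
    obtain ⟨S₂, hS₂, hS₂'⟩ := exists_set_permDist (ψ (g⁻¹ * h)) ((ψ g)⁻¹ * ψ h)
    have hS₃ : ∃ S₃ : Finset (Fin n), (S₃.card : ℝ) ≤ ε * n ∧ ∀ x, x ∉ S₃ →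
        ψ (g⁻¹ * h) x = x → g = h := by
      by_cases hgh : g = h
      · exact ⟨∅, by simp; positivity, fun _ _ _ => hgh⟩
      · obtain ⟨S₃, hS₃, hS₃'⟩ := exists_set_permDist_ne (ψ (g⁻¹ * h)) 1
        refine ⟨S₃, ?_, fun x hx h' => absurd h' (hS₃' x hx)⟩
        rw [hS₃, Fintype.card_fin]
        gcongr
        have := h1 _ mgh (by rw [ne_eq, inv_mul_eq_one]; exact hgh)
        linarith
    obtain ⟨S₃, hS₃, hS₃'⟩ := hS₃
    refine ⟨S₁ ∪ S₂ ∪ S₃, ?_, ?_⟩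
    · have c1 : ((S₁ ∪ S₂ ∪ S₃).card : ℝ) ≤ S₁.card + S₂.card + S₃.card := by
        exact_mod_cast (Finset.card_union_le _ _).trans (Nat.add_le_add_right (Finset.card_union_le _ _) _)
      rw [Fintype.card_fin] at hS₁ hS₂
      have c2 : (S₁.card : ℝ) ≤ 3 * ε * n := by rw [hS₁]; gcongr
      have c3 : (S₂.card : ℝ) ≤ ε * n := by rw [hS₂]; gcongr; exact (h2 g mg h mh).le
      linarith
    · intro x hx
      simp only [Finset.mem_union, not_or] at hx
      refine ⟨hS₁' x hx.1.1, fun he => hS₃' x hx.2 ?_⟩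
      rw [hS₂' x hx.1.2, Equiv.Perm.mul_apply]
      simp only at he
      rw [← he]; simp
  choose! S hS hS' using key
  refine ⟨n, hn, ψ, (D ×ˢ D).biUnion S, ?_, ?_⟩
  · calc (((D ×ˢ D).biUnion S).card : ℝ) ≤ ∑ p ∈ D ×ˢ D, ((S p).card : ℝ) := by
          exact_mod_cast Finset.card_biUnion_le
      _ ≤ ∑ p ∈ D ×ˢ D, 5 * ε * n := Finset.sum_le_sum hS
      _ = (5 * m) * ε * n := by rw [Finset.sum_const, nsmul_eq_mul]; ring
      _ ≤ δ * n := by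
        gcongr
        rw [hε, mul_div_assoc', div_le_iff₀ (by positivity)]
        nlinarith
  · intro x hx
    have hx' : ∀ g ∈ D, ∀ h ∈ D, x ∉ S (g, h) := by
      intro g hg h hh hxx
      exact hx (Finset.mem_biUnion.2 ⟨(g, h), by simp [hg, hh], hxx⟩)
    exact ⟨fun g hg h hh => (hS' (g, h) (by simp [hg, hh]) x (hx' g hg h hh)).1,
      fun g hg h hh => (hS' (g, h) (by simp [hg, hh]) x (hx' g hg h hh)).2⟩

theorem folner_of_monotileable {A : Type*} [Group A] [DecidableEq A] (hA : MonotileablyAmenable A)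
    (K : Finset A) (ε : ℝ) (hε : 0 < ε) :
    ∃ F : Finset A, F.Nonempty ∧ ∀ a ∈ K, ((F.filter (fun s => a * s ∉ F)).card : ℝ) ≤ ε * F.card := by
  obtain ⟨T, -, hT⟩ := hA K ε hε
  refine ⟨T, ?_, ?_⟩
  · by_contra h
    rw [Finset.not_nonempty_iff_eq_empty] at h
    subst h
    simp at hT
  · intro a ha
    refine le_trans ?_ hT.le
    norm_cast
    refine Finset.card_le_card_of_injOn (fun s => a * s) ?_ ?_
    · intro s hs
      simp only [Finset.coe_filter, Set.mem_ofPred_eq] at hs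
      simp only [Finset.coe_sdiff, Set.mem_sdiff, Finset.mem_coe]
      exact ⟨Finset.mul_mem_mul ha hs.1, hs.2⟩
    · intro s _ t _ h
      exact mul_left_cancel h

section Amin
variable {n : ℕ}

/-- The element of `U` at which `ω` is minimal. -/
noncomputable def amin (U : Finset (Fin n)) (hU : U.Nonempty) (ω : Equiv.Perm (Fin n)) : Fin n :=
  (U.exists_min_image ω hU).choose

lemma amin_mem (U : Finset (Fin n)) (hU : U.Nonempty) (ω : Equiv.Perm (Fin n)) : amin U hU ω ∈ U :=
  (U.exists_min_image ω hU).choose_spec.1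

lemma amin_le (U : Finset (Fin n)) (hU : U.Nonempty) (ω : Equiv.Perm (Fin n)) :
    ∀ y ∈ U, ω (amin U hU ω) ≤ ω y :=
  (U.exists_min_image ω hU).choose_spec.2

lemma amin_eq (U : Finset (Fin n)) (hU : U.Nonempty) (ω : Equiv.Perm (Fin n)) (x : Fin n)
    (hx : x ∈ U) (h : ∀ y ∈ U, ω x ≤ ω y) : amin U hU ω = x :=
  ω.injective (le_antisymm (amin_le U hU ω x hx) (h _ (amin_mem U hU ω)))

lemma amin_count_le (U : Finset (Fin n)) (hU : U.Nonempty) (x y : Fin n) (hx : x ∈ U) (hy : y ∈ U) :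
    (Finset.univ.filter fun ω => amin U hU ω = x).card ≤
    (Finset.univ.filter fun ω => amin U hU ω = y).card := by
  refine Finset.card_le_card_of_injOn (fun ω => ω * Equiv.swap x y) ?_ ?_
  · intro ω hω
    simp only [Finset.coe_filter, Finset.mem_univ, true_and, Set.mem_ofPred_eq] at hω ⊢
    refine amin_eq _ _ _ _ hy ?_
    intro z hz
    simp only [Equiv.Perm.mul_apply, Equiv.swap_apply_right]
    rw [← hω]
    conv_lhs => rw [hω]
    have := amin_le U hU ω (Equiv.swap x y z) (by
      rw [Equiv.swap_apply_def]; split_ifs <;> assumption)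
    rw [hω] at this ⊢
    exact this
  · intro a _ b _ h
    exact mul_right_cancel h

lemma amin_count (U : Finset (Fin n)) (hU : U.Nonempty) (x : Fin n) (hx : x ∈ U) :
    (Finset.univ.filter fun ω => amin U hU ω = x).card * U.card =
      Fintype.card (Equiv.Perm (Fin n)) := by
  have := Finset.card_eq_sum_card_fiberwise (f := fun ω => amin U hU ω)
    (s := (Finset.univ : Finset (Equiv.Perm (Fin n)))) (t := U) (fun ω _ => amin_mem U hU ω)
  rw [← Finset.card_univ, this, Finset.sum_congr rfl (fun y hy =>
    le_antisymm (amin_count_le U hU y x hy hx) (amin_count_le U hU x y hx hy)), Finset.sum_const,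
    smul_eq_mul, mul_comm]

lemma amin_ne_count (U V : Finset (Fin n)) (hU : U.Nonempty) (hV : V.Nonempty) :
    (Finset.univ.filter fun ω => amin U hU ω ≠ amin V hV ω).card * (U ∪ V).card ≤
      ((U \ V).card + (V \ U).card) * Fintype.card (Equiv.Perm (Fin n)) := by
  have hUV : (U ∪ V).Nonempty := hU.inl
  have h1 : (Finset.univ.filter fun ω => amin U hU ω ≠ amin V hV ω) ⊆
      (U \ V ∪ V \ U).biUnion (fun x => Finset.univ.filter fun ω => amin (U ∪ V) hUV ω = x) := by
    intro ω hω
    simp only [Finset.mem_filter, Finset.mem_univ, true_and] at hω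
    simp only [Finset.mem_biUnion, Finset.mem_filter, Finset.mem_univ, true_and, exists_eq_right']
    have hm := amin_mem (U ∪ V) hUV ω
    have hle := amin_le (U ∪ V) hUV ω
    by_contra hc
    simp only [Finset.mem_union, Finset.mem_sdiff] at hm hc
    have hmU : amin (U ∪ V) hUV ω ∈ U := by tauto
    have hmV : amin (U ∪ V) hUV ω ∈ V := by tauto
    apply hω
    rw [amin_eq U hU ω _ hmU (fun y hy => hle y (Finset.mem_union_left _ hy)),
      amin_eq V hV ω _ hmV (fun y hy => hle y (Finset.mem_union_right _ hy))]
  calc _ ≤ (∑ x ∈ (U \ V ∪ V \ U), (Finset.univ.filter fun ω => amin (U ∪ V) hUV ω = x).card) * (U ∪ V).card := by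
        gcongr
        exact (Finset.card_le_card h1).trans Finset.card_biUnion_le
    _ = ∑ x ∈ (U \ V ∪ V \ U), Fintype.card (Equiv.Perm (Fin n)) := by
        rw [Finset.sum_mul]
        refine Finset.sum_congr rfl fun x hx => amin_count _ _ _ ?_
        simp only [Finset.mem_union, Finset.mem_sdiff] at hx ⊢
        tauto
    _ = (U \ V ∪ V \ U).card * Fintype.card (Equiv.Perm (Fin n)) := by
        rw [Finset.sum_const, smul_eq_mul]
    _ ≤ _ := by
        gcongr
        exact Finset.card_union_le _ _

end Amin

lemma exists_perm_of_two_inj {X ι : Type*} [Fintype X] (s : Set ι) (a b : ι → X)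
    (ha : Set.InjOn a s) (hb : Set.InjOn b s) :
    ∃ σ : Equiv.Perm X, ∀ i ∈ s, σ (a i) = b i := by
  let f : X → X := fun v => if h : ∃ i ∈ s, a i = v then b h.choose else v
  have hf : ∀ i ∈ s, f (a i) = b i := by
    intro i hi
    have h : ∃ j ∈ s, a j = a i := ⟨i, hi, rfl⟩
    have h2 : h.choose = i := ha h.choose_spec.1 hi h.choose_spec.2
    simp only [f, dif_pos h]
    rw [h2]
  obtain ⟨σ, hσ⟩ := exists_perm_extend (a '' s) f (by
    rintro _ ⟨i, hi, rfl⟩ _ ⟨j, hj, rfl⟩ h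
    rw [hf i hi, hf j hj] at h
    rw [hb hi hj h])
  exact ⟨σ, fun i hi => (hσ _ ⟨i, hi, rfl⟩).trans (hf i hi)⟩


section Final
variable {G : Type*} [Group G] {n : ℕ}

lemma GoodPt.one {ψ : G → Equiv.Perm (Fin n)} {D : Finset G} {x : Fin n} (hx : GoodPt ψ D x)
    (h1 : (1 : G) ∈ D) : ψ 1 x = x := by
  have := hx.1 1 h1 1 h1
  rw [mul_one] at this
  exact ((ψ 1).injective this).symm

variable {A : Type*} [Group A]

/-- The possible centers of the patches containing `z`. -/
noncomputable def nbr (ψ : G → Equiv.Perm (Fin n)) (η : A →* G) (F : Finset A) (z : Fin n) :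
    Finset (Fin n) :=
  F.image (fun s => (ψ (η s))⁻¹ z)

lemma mem_nbr (ψ : G → Equiv.Perm (Fin n)) (η : A →* G) (F : Finset A) (z x : Fin n) :
    x ∈ nbr ψ η F z ↔ ∃ s ∈ F, ψ (η s) x = z := by
  simp only [nbr, Finset.mem_image, Equiv.Perm.inv_eq_iff_eq]
  exact ⟨fun ⟨s, hs, h⟩ => ⟨s, hs, h.symm⟩, fun ⟨s, hs, h⟩ => ⟨s, hs, h.symm⟩⟩

lemma nbr_nonempty (ψ : G → Equiv.Perm (Fin n)) (η : A →* G) {F : Finset A} (hF : F.Nonempty)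
    (z : Fin n) : (nbr ψ η F z).Nonempty := hF.image _

/-- The center of the patch containing `z`, for the random order given by `ω`. -/
noncomputable def cen (ψ : G → Equiv.Perm (Fin n)) (η : A →* G) {F : Finset A} (hF : F.Nonempty)
    (z : Fin n) (ω : Equiv.Perm (Fin n)) : Fin n :=
  amin (nbr ψ η F z) (nbr_nonempty ψ η hF z) ω

lemma exists_pi (ψ : G → Equiv.Perm (Fin n)) (D : Finset G) (η₁ η₂ : A →* G)
    (hi₁ : Function.Injective η₁) (hi₂ : Function.Injective η₂) (E : Finset A)
    (h₁ : ∀ s ∈ E, η₁ s ∈ D) (h₂ : ∀ s ∈ E, η₂ s ∈ D) (x : Fin n) :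
    ∃ π : Equiv.Perm (Fin n), GoodPt ψ D x → ∀ h ∈ E, π (ψ (η₁ h) x) = ψ (η₂ h) x := by
  by_cases hx : GoodPt ψ D x
  · obtain ⟨σ, hσ⟩ := exists_perm_of_two_inj (E : Set A) (fun h => ψ (η₁ h) x)
      (fun h => ψ (η₂ h) x)
      (fun s hs t ht h => hi₁ (hx.2 _ (h₁ s hs) _ (h₁ t ht) h))
      (fun s hs t ht h => hi₂ (hx.2 _ (h₂ s hs) _ (h₂ t ht) h))
    exact ⟨σ, fun _ => hσ⟩
  · exact ⟨1, fun h => absurd h hx⟩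

lemma exists_tau (ψ : G → Equiv.Perm (Fin n)) (D : Finset G) (η₁ η₂ : A →* G)
    (hi₁ : Function.Injective η₁) (hi₂ : Function.Injective η₂) (F E : Finset A) (hF : F.Nonempty)
    (h₁ : ∀ s ∈ E, η₁ s ∈ D) (h₂ : ∀ s ∈ E, η₂ s ∈ D) (hFE : F ⊆ E)
    (hFF : ∀ r ∈ F, ∀ s ∈ F, r⁻¹ * s ∈ E) :
    ∃ (τ₀ : Equiv.Perm (Fin n × Equiv.Perm (Fin n))) (π : Fin n → Equiv.Perm (Fin n)),
      ∀ x ω r, r ∈ F → GoodPt ψ D x → cen ψ η₁ hF (ψ (η₁ r) x) ω = x →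
        τ₀ (ψ (η₁ r) x, ω) = (ψ (η₂ r) x, ω * (π x)⁻¹) := by
  choose π hπ using exists_pi ψ D η₁ η₂ hi₁ hi₂ E h₁ h₂
  have h1E : (1 : A) ∈ E := by
    obtain ⟨r, hr⟩ := hF
    simpa using hFF r hr r hr
  have h1D : (1 : G) ∈ D := by simpa using h₁ 1 h1E
  have hπx : ∀ x, GoodPt ψ D x → π x x = x := by
    intro x hx
    have := hπ x hx 1 h1E
    simpa [hx.one h1D] using this
  have trans : ∀ x ω r, r ∈ F → GoodPt ψ D x → cen ψ η₁ hF (ψ (η₁ r) x) ω = x →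
      cen ψ η₂ hF (ψ (η₂ r) x) (ω * (π x)⁻¹) = x := by
    intro x ω r hr hx hc
    refine amin_eq _ _ _ _ ((mem_nbr _ _ _ _ _).2 ⟨r, hr, rfl⟩) ?_
    intro y hy
    obtain ⟨s, hs, hsy⟩ := (mem_nbr _ _ _ _ _).1 hy
    have e1 : ψ (η₂ s) (ψ (η₂ (s⁻¹ * r)) x) = ψ (η₂ r) x := by
      rw [← hx.1 _ (h₂ _ (hFE hs)) _ (h₂ _ (hFF s hs r hr)), ← map_mul, mul_inv_cancel_left]
    have e2 : ψ (η₁ s) (ψ (η₁ (s⁻¹ * r)) x) = ψ (η₁ r) x := by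
      rw [← hx.1 _ (h₁ _ (hFE hs)) _ (h₁ _ (hFF s hs r hr)), ← map_mul, mul_inv_cancel_left]
    have e3 : y = π x (ψ (η₁ (s⁻¹ * r)) x) := by
      rw [hπ x hx _ (hFF s hs r hr)]
      exact (ψ (η₂ s)).injective (hsy.trans e1.symm)
    have e4 : (π x)⁻¹ x = x := by
      rw [Equiv.Perm.inv_eq_iff_eq, hπx x hx]
    rw [Equiv.Perm.mul_apply, Equiv.Perm.mul_apply, e4, e3, (Equiv.Perm.inv_eq_iff_eq (f := π x)).2 rfl]
    have := amin_le (nbr ψ η₁ F (ψ (η₁ r) x)) (nbr_nonempty ψ η₁ hF _) ω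
      (ψ (η₁ (s⁻¹ * r)) x) ((mem_nbr _ _ _ _ _).2 ⟨s, hs, e2⟩)
    unfold cen at hc
    rwa [hc] at this
  obtain ⟨τ₀, hτ⟩ := exists_perm_of_two_inj
    {i : Fin n × Equiv.Perm (Fin n) × A | i.2.2 ∈ F ∧ GoodPt ψ D i.1 ∧
      cen ψ η₁ hF (ψ (η₁ i.2.2) i.1) i.2.1 = i.1}
    (fun i => (ψ (η₁ i.2.2) i.1, i.2.1)) (fun i => (ψ (η₂ i.2.2) i.1, i.2.1 * (π i.1)⁻¹))
    (by
      rintro ⟨x, ω, r⟩ ⟨hr, hx, hc⟩ ⟨x', ω', r'⟩ ⟨hr', hx', hc'⟩ h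
      simp only [Prod.mk.injEq] at h hr hx hc hr' hx' hc'
      obtain ⟨h, rfl⟩ := h
      rw [h, hc'] at hc
      subst hc
      have := hi₁ (hx.2 _ (h₁ _ (hFE hr)) _ (h₁ _ (hFE hr')) h)
      subst this
      rfl)
    (by
      rintro ⟨x, ω, r⟩ ⟨hr, hx, hc⟩ ⟨x', ω', r'⟩ ⟨hr', hx', hc'⟩ h
      simp only [Prod.mk.injEq] at h hr hx hc hr' hx' hc'
      obtain ⟨h, h'⟩ := h
      have t := trans x ω r hr hx hc
      have t' := trans x' ω' r' hr' hx' hc'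
      rw [h, h', t'] at t
      subst t
      have := hi₂ (hx.2 _ (h₂ _ (hFE hr)) _ (h₂ _ (hFE hr')) h)
      subst this
      rw [mul_right_cancel h'])
  exact ⟨τ₀, π, fun x ω r hr hx hc => hτ (x, ω, r) ⟨hr, hx, hc⟩⟩

lemma cen_ne_count (ψ : G → Equiv.Perm (Fin n)) (D : Finset G) (η : A →* G)
    (hi : Function.Injective η) (F : Finset A) (hF : F.Nonempty) (hD : ∀ s ∈ F, η s ∈ D)
    (a : A) (ha : η a ∈ D) (z : Fin n) (ε : ℝ)
    (hz : ∀ s ∈ F, GoodPt ψ D ((ψ (η s))⁻¹ z))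
    (haz : ∀ s ∈ F, GoodPt ψ D ((ψ (η s))⁻¹ (ψ (η a) z)))
    (hf : ((F.filter (fun s => a * s ∉ F)).card : ℝ) ≤ ε * F.card)
    (hf' : ((F.filter (fun s => a⁻¹ * s ∉ F)).card : ℝ) ≤ ε * F.card) :
    ((Finset.univ.filter fun ω => cen ψ η hF (ψ (η a) z) ω ≠ cen ψ η hF z ω).card : ℝ) ≤
      2 * ε * Fintype.card (Equiv.Perm (Fin n)) := by
  have hcard : (nbr ψ η F z).card = F.card := by
    refine Finset.card_image_of_injOn ?_
    intro s hs t ht h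
    simp only at h
    have hg := hz s hs
    apply hi
    refine hg.2 _ (hD s hs) _ (hD t ht) ?_
    conv_rhs => rw [h]
    simp
  have d1 : (nbr ψ η F z \ nbr ψ η F (ψ (η a) z)).card ≤ (F.filter (fun s => a * s ∉ F)).card := by
    refine (Finset.card_le_card ?_).trans
      (Finset.card_image_le (s := F.filter (fun s => a * s ∉ F)) (f := fun s => (ψ (η s))⁻¹ z))
    intro x hx
    rw [Finset.mem_sdiff, mem_nbr, mem_nbr] at hx
    obtain ⟨⟨s, hs, hsx⟩, hn⟩ := hx
    have hxe : (ψ (η s))⁻¹ z = x := by rw [← hsx]; simp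
    refine Finset.mem_image.2 ⟨s, Finset.mem_filter.2 ⟨hs, fun has => hn ⟨a * s, has, ?_⟩⟩, hxe⟩
    have hg := hz s hs
    rw [hxe] at hg
    rw [map_mul, hg.1 _ ha _ (hD s hs), hsx]
  have d2 : (nbr ψ η F (ψ (η a) z) \ nbr ψ η F z).card ≤
      (F.filter (fun s => a⁻¹ * s ∉ F)).card := by
    refine (Finset.card_le_card ?_).trans
      (Finset.card_image_le (s := F.filter (fun s => a⁻¹ * s ∉ F))
        (f := fun s => (ψ (η s))⁻¹ (ψ (η a) z)))
    intro x hx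
    rw [Finset.mem_sdiff, mem_nbr, mem_nbr] at hx
    obtain ⟨⟨s, hs, hsx⟩, hn⟩ := hx
    have hxe : (ψ (η s))⁻¹ (ψ (η a) z) = x := by rw [← hsx]; simp
    refine Finset.mem_image.2 ⟨s, Finset.mem_filter.2 ⟨hs, fun has => hn ⟨a⁻¹ * s, has, ?_⟩⟩, hxe⟩
    have hg := haz s hs
    rw [hxe] at hg
    apply (ψ (η a)).injective
    rw [← hg.1 _ ha _ (hD _ has), ← map_mul, mul_inv_cancel_left, hsx]
  have hc := amin_ne_count (nbr ψ η F (ψ (η a) z)) (nbr ψ η F z) (nbr_nonempty ψ η hF _)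
    (nbr_nonempty ψ η hF _)
  have hU : F.card ≤ (nbr ψ η F (ψ (η a) z) ∪ nbr ψ η F z).card := by
    rw [← hcard]; exact Finset.card_le_card Finset.subset_union_right
  have hFp : (0 : ℝ) < F.card := by exact_mod_cast hF.card_pos
  change ((Finset.univ.filter fun ω => amin _ (nbr_nonempty ψ η hF (ψ (η a) z)) ω ≠
    amin _ (nbr_nonempty ψ η hF z) ω).card : ℝ) ≤ _
  set c := (Finset.univ.filter fun ω => amin _ (nbr_nonempty ψ η hF (ψ (η a) z)) ω ≠
    amin _ (nbr_nonempty ψ η hF z) ω).card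
  have h3 : c * F.card ≤ ((F.filter (fun s => a⁻¹ * s ∉ F)).card +
      (F.filter (fun s => a * s ∉ F)).card) * Fintype.card (Equiv.Perm (Fin n)) :=
    (Nat.mul_le_mul_left c hU).trans (hc.trans (Nat.mul_le_mul_right _ (Nat.add_le_add d2 d1)))
  have h4 : (c : ℝ) * F.card ≤ (2 * ε * Fintype.card (Equiv.Perm (Fin n))) * F.card := by
    calc (c : ℝ) * F.card ≤ ((F.filter (fun s => a⁻¹ * s ∉ F)).card +
      (F.filter (fun s => a * s ∉ F)).card) * Fintype.card (Equiv.Perm (Fin n)) := by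
          exact_mod_cast h3
      _ ≤ (ε * F.card + ε * F.card) * Fintype.card (Equiv.Perm (Fin n)) := by gcongr
      _ = _ := by ring
  exact le_of_mul_le_mul_right h4 hFp

end Final

theorem hasPre_of_sofic {G : Type*} [Group G] [DecidableEq G]
    (A B : Subgroup G) (φ : A ≃* B)
    (hG : IsSofic G) (hA : MonotileablyAmenable A) (K : Finset G) (ε : ℝ) (hε : 0 < ε) :
    HasPre A B φ K ε := by
  let η₁ : A →* G := A.subtype
  let η₂ : A →* G := B.subtype.comp φ.toMonoidHom
  have hi₁ : Function.Injective η₁ := A.subtype_injective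
  have hi₂ : Function.Injective η₂ := B.subtype_injective.comp φ.injective
  have hη₁ : ∀ a, η₁ a = (a : G) := fun a => rfl
  have hη₂ : ∀ a, η₂ a = (φ a : G) := fun a => rfl
  let KA : Finset A := K.subtype (· ∈ A)
  obtain ⟨F, hF, hfol⟩ := folner_of_monotileable hA (KA ∪ KA⁻¹) (ε / 4) (by positivity)
  let E : Finset A := F ∪ F⁻¹ * F
  let D : Finset G := insert 1 K * (E.image η₁ ∪ E.image η₂)
  have hFE : F ⊆ E := Finset.subset_union_left
  have hFF : ∀ r ∈ F, ∀ s ∈ F, r⁻¹ * s ∈ E := fun r hr s hs =>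
    Finset.mem_union_right _ (Finset.mul_mem_mul (Finset.inv_mem_inv hr) hs)
  have h1E : (1 : A) ∈ E := by
    obtain ⟨r, hr⟩ := hF
    simpa using hFF r hr r hr
  have hK₁ : ∀ g ∈ K, ∀ s ∈ E, g * η₁ s ∈ D := fun g hg s hs => Finset.mul_mem_mul
    (Finset.mem_insert_of_mem hg) (Finset.mem_union_left _ (Finset.mem_image_of_mem _ hs))
  have hK₂ : ∀ g ∈ K, ∀ s ∈ E, g * η₂ s ∈ D := fun g hg s hs => Finset.mul_mem_mul
    (Finset.mem_insert_of_mem hg) (Finset.mem_union_right _ (Finset.mem_image_of_mem _ hs))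
  have h₁ : ∀ s ∈ E, η₁ s ∈ D := fun s hs => by
    have := Finset.mul_mem_mul (Finset.mem_insert_self 1 K)
      (Finset.mem_union_left (E.image η₂) (Finset.mem_image_of_mem η₁ hs))
    rwa [one_mul] at this
  have h₂ : ∀ s ∈ E, η₂ s ∈ D := fun s hs => by
    have := Finset.mul_mem_mul (Finset.mem_insert_self 1 K)
      (Finset.mem_union_right (E.image η₁) (Finset.mem_image_of_mem η₂ hs))
    rwa [one_mul] at this
  have hKD : ∀ g ∈ K, g ∈ D := fun g hg => by simpa using hK₁ g hg 1 h1E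
  have h1D : (1 : G) ∈ D := by simpa using h₁ 1 h1E
  obtain ⟨n, hn, ψ, S, hS, hgood⟩ := sofic_good hG D (ε / (4 * (1 + F.card))) (by positivity)
  have : NeZero n := ⟨hn.ne'⟩
  obtain ⟨τ₀, π, hτ⟩ := exists_tau ψ D η₁ η₂ hi₁ hi₂ F E hF h₁ h₂ hFE hFF
  let BadX : Finset (Fin n) := S ∪ F.biUnion (fun s => S.image (ψ (η₁ s)))
  have hBadcard : (BadX.card : ℝ) ≤ ε / 4 * n := by
    have h1 : BadX.card ≤ S.card + F.card * S.card := by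
      refine (Finset.card_union_le _ _).trans (Nat.add_le_add_left ?_ _)
      exact Finset.card_biUnion_le_card_mul _ _ _ (fun s _ => Finset.card_image_le)
    have h2 : (BadX.card : ℝ) ≤ (1 + F.card) * S.card := by
      have : (BadX.card : ℝ) ≤ S.card + F.card * S.card := by exact_mod_cast h1
      linarith
    calc (BadX.card : ℝ) ≤ (1 + F.card) * (ε / (4 * (1 + F.card)) * n) := h2.trans (by gcongr)
      _ = ε / 4 * n := by field_simp
  have hX1 : ∀ z, z ∉ BadX → GoodPt ψ D z := fun z hz =>
    hgood z (fun h => hz (Finset.mem_union_left _ h))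
  have hX2 : ∀ z, z ∉ BadX → ∀ s ∈ F, GoodPt ψ D ((ψ (η₁ s))⁻¹ z) := fun z hz s hs =>
    hgood _ (fun h => hz (Finset.mem_union_right _ (Finset.mem_biUnion.2
      ⟨s, hs, Finset.mem_image.2 ⟨_, h, by simp⟩⟩)))
  have hcen : ∀ z ω, z ∉ BadX → ∃ s ∈ F, GoodPt ψ D (cen ψ η₁ hF z ω) ∧
      ψ (η₁ s) (cen ψ η₁ hF z ω) = z ∧
      τ₀ (z, ω) = (ψ (η₂ s) (cen ψ η₁ hF z ω), ω * (π (cen ψ η₁ hF z ω))⁻¹) := by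
    intro z ω hz
    obtain ⟨s, hs, hsx⟩ := (mem_nbr _ _ _ _ _).1
      (amin_mem (nbr ψ η₁ F z) (nbr_nonempty ψ η₁ hF z) ω)
    change ψ (η₁ s) (cen ψ η₁ hF z ω) = z at hsx
    have hg := hX2 z hz s hs
    have hxe : (ψ (η₁ s))⁻¹ z = cen ψ η₁ hF z ω := by
      rw [Equiv.Perm.inv_eq_iff_eq]; exact hsx.symm
    rw [hxe] at hg
    refine ⟨s, hs, hg, hsx, ?_⟩
    have := hτ (cen ψ η₁ hF z ω) ω s hs hg (by rw [hsx])
    rwa [hsx] at this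
  let Ω := Equiv.Perm (Fin n)
  have hcardP : (Fintype.card (Fin n × Equiv.Perm (Fin n)) : ℝ) =
      n * Fintype.card (Equiv.Perm (Fin n)) := by
    rw [Fintype.card_prod, Fintype.card_fin]; push_cast; rfl
  have hBadP : ∀ T : Finset (Fin n), (T.card : ℝ) ≤ ε / 4 * n →
      ((T ×ˢ (Finset.univ : Finset (Equiv.Perm (Fin n)))).card : ℝ) ≤
      ε / 4 * (n * Fintype.card (Equiv.Perm (Fin n))) := by
    intro T hT
    rw [Finset.card_product, Finset.card_univ]
    push_cast
    rw [← mul_assoc]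
    gcongr
  refine ⟨Fin n × Equiv.Perm (Fin n), Fin n × Equiv.Perm (Fin n), inferInstance, inferInstance,
    inferInstance, fun g => (ψ g).prodCongr (Equiv.refl _), τ₀,
    fun p => (cen ψ η₁ hF p.1 p.2, p.2), BadX ×ˢ Finset.univ, ?_, ?_, ?_, ?_, ?_, ?_⟩
  · rw [hcardP]
    refine (hBadP _ hBadcard).trans ?_
    gcongr
    linarith
  · rintro ⟨z, ω⟩ hz g hg h hh
    have hz' : z ∉ BadX := by simpa using hz
    simp only [Equiv.prodCongr_apply, Prod.map_apply, Equiv.refl_apply]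
    rw [(hX1 z hz').1 g (hKD g hg) h (hKD h hh)]
  · rintro ⟨z, ω⟩ hz g hg h
    have hz' : z ∉ BadX := by simpa using hz
    simp only [Equiv.prodCongr_apply, Prod.map_apply, Equiv.refl_apply, Prod.mk.injEq, and_true] at h
    exact (hX1 z hz').2 g (hKD g hg) 1 h1D (h.trans ((hX1 z hz').one h1D).symm)
  · intro a haK hfaK
    let BadA : Finset (Fin n) := Finset.univ.filter (fun z => ψ a z ∈ BadX)
    have hBadA : (BadA.card : ℝ) ≤ ε / 4 * n := by
      refine le_trans ?_ hBadcard
      norm_cast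
      refine Finset.card_le_card_of_injOn (ψ a) ?_ (ψ a).injective.injOn
      intro z hz
      simpa [BadA] using hz
    let C : Finset (Fin n × Equiv.Perm (Fin n)) :=
      (Finset.univ.filter (fun z => z ∉ BadX ∧ ψ a z ∉ BadX)).biUnion
        (fun z => (Finset.univ.filter fun ω => cen ψ η₁ hF (ψ (η₁ a) z) ω ≠ cen ψ η₁ hF z ω).image
          (fun ω => (z, ω)))
    have haKA : a ∈ KA := by simpa [KA] using haK
    have hC : (C.card : ℝ) ≤ ε / 2 * (n * Fintype.card (Equiv.Perm (Fin n))) := by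
      calc (C.card : ℝ) ≤ ∑ z ∈ Finset.univ.filter (fun z => z ∉ BadX ∧ ψ a z ∉ BadX),
            (2 * (ε / 4) * Fintype.card (Equiv.Perm (Fin n)) : ℝ) := by
            refine le_trans (b := ∑ z ∈ Finset.univ.filter (fun z => z ∉ BadX ∧ ψ a z ∉ BadX),
              (((Finset.univ.filter fun ω => cen ψ η₁ hF (ψ (η₁ a) z) ω ≠ cen ψ η₁ hF z ω).image
                (fun ω => (z, ω))).card : ℝ)) (by exact_mod_cast Finset.card_biUnion_le) ?_
            refine Finset.sum_le_sum fun z hz => ?_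
            simp only [Finset.mem_filter, Finset.mem_univ, true_and] at hz
            refine le_trans (by exact_mod_cast Finset.card_image_le)
              (cen_ne_count ψ D η₁ hi₁ F hF (fun s hs => h₁ s (hFE hs)) a (hKD _ haK) z (ε / 4)
                (hX2 z hz.1) (hX2 _ hz.2)
                (by convert hfol a (Finset.mem_union_left _ haKA))
                (by convert hfol a⁻¹ (Finset.mem_union_right _ (Finset.inv_mem_inv haKA))))
        _ = (Finset.univ.filter (fun z => z ∉ BadX ∧ ψ a z ∉ BadX)).card *
            (2 * (ε / 4) * Fintype.card (Equiv.Perm (Fin n)) : ℝ) := by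
            rw [Finset.sum_const, nsmul_eq_mul]
        _ ≤ n * (2 * (ε / 4) * Fintype.card (Equiv.Perm (Fin n)) : ℝ) := by
            gcongr
            simpa using Finset.card_le_univ (Finset.univ.filter (fun z => z ∉ BadX ∧ ψ a z ∉ BadX))
        _ = _ := by ring
    refine ⟨BadX ×ˢ Finset.univ ∪ BadA ×ˢ Finset.univ ∪ C, ?_, ?_⟩
    · rw [hcardP]
      have c1 : ((BadX ×ˢ Finset.univ ∪ BadA ×ˢ Finset.univ ∪ C).card : ℝ) ≤
          (BadX ×ˢ (Finset.univ : Finset (Equiv.Perm (Fin n)))).card +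
          (BadA ×ˢ (Finset.univ : Finset (Equiv.Perm (Fin n)))).card + C.card := by
        exact_mod_cast (Finset.card_union_le _ _).trans
          (Nat.add_le_add_right (Finset.card_union_le _ _) _)
      have c2 := hBadP _ hBadcard
      have c3 := hBadP _ hBadA
      linarith
    · rintro ⟨z, ω⟩ hz
      simp only [Finset.mem_union, not_or, Finset.mem_product, Finset.mem_univ, and_true] at hz
      obtain ⟨⟨hz1, hz2⟩, hz3⟩ := hz
      have hz2' : ψ (η₁ a) z ∉ BadX := by
        intro h
        exact hz2 (Finset.mem_filter.2 ⟨Finset.mem_univ _, h⟩)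
      have hce : cen ψ η₁ hF (ψ (η₁ a) z) ω = cen ψ η₁ hF z ω := by
        by_contra hne
        apply hz3
        refine Finset.mem_biUnion.2 ⟨z, by simpa using ⟨hz1, hz2'⟩, ?_⟩
        exact Finset.mem_image.2 ⟨ω, by simpa using hne, rfl⟩
      simp only [Equiv.prodCongr_apply, Prod.map_apply, Equiv.refl_apply]
      refine ⟨?_, by rw [← hη₁, hce]⟩
      obtain ⟨s, hs, hg, hsz, ht⟩ := hcen z ω hz1
      obtain ⟨s', hs', hg', hsz', ht'⟩ := hcen (ψ (η₁ a) z) ω hz2'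
      rw [hce] at hsz' ht'
      rw [← hη₁, ht, ht']
      have e1 : ψ (η₁ a * η₁ s) (cen ψ η₁ hF z ω) = ψ (η₁ s') (cen ψ η₁ hF z ω) := by
        rw [hg.1 (η₁ a) (hKD _ haK) _ (h₁ _ (hFE hs)), hsz, hsz']
      have e2 : s' = a * s := by
        apply hi₁
        rw [map_mul]
        exact (hg.2 _ (hK₁ _ haK _ (hFE hs)) _ (h₁ _ (hFE hs')) e1).symm
      simp only [Prod.map_apply, Equiv.refl_apply, Prod.mk.injEq, and_true]
      rw [← hη₂, ← hg.1 (η₂ a) (hKD _ hfaK) _ (h₂ _ (hFE hs)), e2, map_mul]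
  · rintro ⟨z, ω⟩ g hz hgz hg hy
    have hz' : z ∉ BadX := by simpa using hz
    have hgz' : ψ g z ∉ BadX := by simpa using hgz
    simp only [Equiv.prodCongr_apply, Prod.map_apply, Equiv.refl_apply, Prod.mk.injEq, and_true] at hy
    obtain ⟨s, hs, hgd, hsz, ht⟩ := hcen z ω hz'
    obtain ⟨s', hs', hgd', hsz', ht'⟩ := hcen (ψ g z) ω hgz'
    rw [hy] at hsz'
    have e1 : ψ (g * η₁ s) (cen ψ η₁ hF z ω) = ψ (η₁ s') (cen ψ η₁ hF z ω) := by
      rw [hgd.1 _ (hKD _ hg) _ (h₁ _ (hFE hs)), hsz, hsz']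
    have e2 := hgd.2 _ (hK₁ _ hg _ (hFE hs)) _ (h₁ _ (hFE hs')) e1
    rw [eq_mul_inv_of_mul_eq e2]
    exact A.mul_mem s'.2 (A.inv_mem s.2)
  · rintro ⟨z, ω⟩ ⟨z', ω'⟩ g hz hgz hg hy hτe
    have hz' : z ∉ BadX := by simpa using hz
    have hgz' : z' ∉ BadX := by simpa using hgz
    simp only [Prod.mk.injEq] at hy
    obtain ⟨hy, rfl⟩ := hy
    obtain ⟨s, hs, hgd, hsz, ht⟩ := hcen z ω' hz'
    obtain ⟨s', hs', hgd', hsz', ht'⟩ := hcen z' ω' hgz'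
    rw [ht, ht', hy] at hτe
    simp only [Equiv.prodCongr_apply, Prod.map_apply, Equiv.refl_apply, Prod.mk.injEq, and_true] at hτe
    rw [← hgd.1 _ (hKD _ hg) _ (h₂ _ (hFE hs))] at hτe
    have e2 := hgd.2 _ (h₂ _ (hFE hs')) _ (hK₂ _ hg _ (hFE hs)) hτe
    rw [eq_mul_inv_of_mul_eq e2.symm]
    exact B.mul_mem (φ s').2 (B.inv_mem (φ s).2)

/-- Let `G` be a sofic group, let `A` be a monotileably amenable subgroup of `G` and let
`θ : A → G` be an injective group homomorphism (with image the subgroup `B` and induced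
isomorphism `φ : A ≃* B`). Then the HNN extension `G*_θ`, generated by `G` and an extra
generator `t` with the relations conjugating `A` to `B` via `φ`, is sofic. -/
theorem isSofic_HNNExtension {G : Type*} [Group G] [DecidableEq G]
    (A B : Subgroup G) (φ : A ≃* B)
    (hG : IsSofic G) (hA : MonotileablyAmenable A) :
    IsSofic (HNNExtension G A B φ) := by
  exact sofic_of_hasApprox A B φ (fun K N => hasApprox_of_hasPre A B φ K N
    (hasPre_of_sofic A B φ hG hA K _ (by positivity)))
end
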